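/- (Non-asymptotic 2-Wasserstein error bound for LMC, Theorem 3) Let f : ℝ^d → ℝ be three times continuously differentiable with m·I ≼ ∇²f(x) ≼ L·I for all x (0 < m ≤ L), κ = L/m, ∇f(0) = 0, and ‖∇(Δf)(x)‖ ≤ G(1+‖x‖) for all x for some G > 0. Let μ be the probability measure on ℝ^d with density proportional to exp(−f), assumed to have finite second moment. Let (x̄_k) be the LMC iterates with step size h started from a square-integrable x₀. Then for every h with 0 < h ≤ 1/(4κL) and every k ∈ ℕ: W₂(Law(x̄_k), μ) ≤ exp(−mkh) · W₂(Law(x₀), μ) + C_LMC · h, where C_LMC = (10(L² + G)/m^{3/2}) · √(2d + m(E‖x₀‖² + 1)). -/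

import Mathlib

open MeasureTheory ProbabilityTheory Real
open scoped ENNReal NNReal

noncomputable section

/-- `ℝ^d` with the Euclidean structure. -/
abbrev Euc (d : ℕ) := EuclideanSpace ℝ (Fin d)

/-- The standard Gaussian measure `N(0, I_d)` on `ℝ^d`. -/
noncomputable def stdGaussian (d : ℕ) : Measure (Euc d) :=
  (Measure.pi fun _ : Fin d => gaussianReal 0 1).map (EuclideanSpace.equiv (Fin d) ℝ).symm

/-- The centered Gaussian measure on `ℝ^d` with covariance `σ2 • I_d`. -/
noncomputable def isoGaussian (d : ℕ) (σ2 : ℝ) : Measure (Euc d) :=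
  (stdGaussian d).map fun x => Real.sqrt σ2 • x

/-- `B` is a standard `d`-dimensional Brownian motion with respect to the filtration `ℱ`
under the probability measure `P`. -/
structure IsStdBrownian {d : ℕ} {Ω : Type*} {mΩ : MeasurableSpace Ω} (P : Measure Ω)
    (ℱ : Filtration ℝ mΩ) (B : ℝ → Ω → Euc d) : Prop where
  init : ∀ ω, B 0 ω = 0
  cont : ∀ ω, Continuous fun t => B t ω
  adapted : StronglyAdapted ℱ B
  incr_law : ∀ s t : ℝ, 0 ≤ s → s ≤ t →
    P.map (fun ω => B t ω - B s ω) = isoGaussian d (t - s)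
  incr_indep : ∀ s t : ℝ, 0 ≤ s → s ≤ t →
    Indep (MeasurableSpace.comap (fun ω => B t ω - B s ω) inferInstance) (ℱ s) P

/-- `X` is a (pathwise) solution of the overdamped Langevin dynamics
`dX_t = -∇f(X_t) dt + √2 dB_t`: a continuous adapted process satisfying the integral
equation `X_t = X_0 - ∫₀ᵗ ∇f(X_s) ds + √2 B_t` for all `t ≥ 0`. -/
structure IsLangevinSolution {d : ℕ} {Ω : Type*} {mΩ : MeasurableSpace Ω}
    (ℱ : Filtration ℝ mΩ) (f : Euc d → ℝ) (B : ℝ → Ω → Euc d) (X : ℝ → Ω → Euc d) : Prop where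
  cont : ∀ ω, Continuous fun t => X t ω
  adapted : StronglyAdapted ℱ X
  eqn : ∀ ω, ∀ t : ℝ, 0 ≤ t →
    X t ω = X 0 ω - (∫ s in (0:ℝ)..t, gradient f (X s ω)) + Real.sqrt 2 • B t ω

/-- The Hessian bounds `m • I ≼ ∇²f(x) ≼ L • I` for all `x`, expressed through the second
iterated Fréchet derivative: `m ‖v‖² ≤ ⟨v, ∇²f(x) v⟩ ≤ L ‖v‖²`. -/
def HessianBounds {d : ℕ} (m L : ℝ) (f : Euc d → ℝ) : Prop :=
  ∀ x v : Euc d, m * ‖v‖ ^ 2 ≤ iteratedFDeriv ℝ 2 f x ![v, v] ∧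
    iteratedFDeriv ℝ 2 f x ![v, v] ≤ L * ‖v‖ ^ 2


/-- The 2-Wasserstein distance:
`W₂(μ, ν) = inf over couplings γ of (∫ ‖x - y‖² dγ)^{1/2}`, where a coupling of `μ` and `ν`
is a probability measure on the product space whose marginals are `μ` and `ν`. -/
noncomputable def W2 {α : Type*} [MeasurableSpace α] [NormedAddCommGroup α]
    (μ ν : Measure α) : ℝ :=
  Real.sqrt (ENNReal.toReal
    (⨅ γ ∈ {γ : Measure (α × α) |
        IsProbabilityMeasure γ ∧ γ.map Prod.fst = μ ∧ γ.map Prod.snd = ν},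
      ∫⁻ p, (‖p.1 - p.2‖₊ : ℝ≥0∞) ^ 2 ∂γ))

/-- `μ` is the probability measure with density proportional to `exp (-f)` with respect to
Lebesgue measure. -/
def IsGibbs {d : ℕ} (f : Euc d → ℝ) (μ : Measure (Euc d)) : Prop :=
  IsProbabilityMeasure μ ∧ ∃ c : ℝ≥0∞, c ≠ 0 ∧ c ≠ ⊤ ∧
    μ = c • (volume : Measure (Euc d)).withDensity fun x => ENNReal.ofReal (Real.exp (-f x))


/-- The Laplacian of `f : ℝ^d → ℝ`, i.e. the trace of its Hessian. -/
noncomputable def lapl {d : ℕ} (f : Euc d → ℝ) (x : Euc d) : ℝ :=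
  ∑ i : Fin d,
    iteratedFDeriv ℝ 2 f x ![EuclideanSpace.single i (1:ℝ), EuclideanSpace.single i (1:ℝ)]

/-! Run the chain with step `h` next to the chain with step `h / 2`, two half-steps sharing the
noise of one full step. Conditionally on the current positions the difference of one double move is
a contraction by `1 - m * h` plus `h / 2` times the increment of the drift `b = ∇f` over a
half-step. The mean of that increment is `O(h)`: Stein's identity along the heat flow expresses it
through `Δ b = ∇(Δ f)`, which grows linearly, while its variance `O(h)` enters the squared distance
only at order `h ^ 3`. Contraction turns these errors into a distance `C * h`, uniformly in time,
and summing over `h, h / 2, h / 4, …` bounds the distance of the step-`h` chain from ever finer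
discretisations by `2 * C * h`.

The fine chains approach `μ` as soon as one step of size `δ` moves `μ` by `o(δ)`. An LMC step of
size `δ` is the position part of a leapfrog step of size `√(2 * δ)`, which becomes a
volume-preserving involution after a momentum flip. The Metropolis-corrected step preserves
`μ ⊗ 𝒩`, so the squared distance is at most the expectation of the energy error, `o(δ)`, times the
squared displacement, `O(δ)`. -/

open Module
local notation "𝒩" => ProbabilityTheory.stdGaussian

section Gaussian

variable {E : Type*} [NormedAddCommGroup E] [InnerProductSpace ℝ E]

/-- The density of the standard Gaussian measure with respect to Lebesgue measure. -/
def gaussianDensity (x : E) : ℝ := (2 * π) ^ (-(finrank ℝ E / 2 : ℝ)) * exp (-(1 / 2) * ‖x‖ ^ 2)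

lemma gaussianDensity_pos (x : E) : 0 < gaussianDensity x := by
  unfold gaussianDensity; positivity

lemma continuous_gaussianDensity : Continuous (gaussianDensity : E → ℝ) := by
  unfold gaussianDensity; fun_prop

lemma hasFDerivAt_gaussianDensity (x : E) :
    HasFDerivAt gaussianDensity (-(gaussianDensity x) • innerSL ℝ x) x := by
  have h := (((hasStrictFDerivAt_norm_sq x).hasFDerivAt.const_mul (-(1 / 2))).exp).const_mul
    ((2 * π) ^ (-(finrank ℝ E / 2 : ℝ)))
  convert! h using 1
  rw [gaussianDensity]
  module

variable [FiniteDimensional ℝ E] [MeasurableSpace E] [BorelSpace E]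

lemma memLp_id_stdGaussian (p : ℝ≥0) : MemLp id p (𝒩 E) :=
  IsGaussian.memLp_id _ p ENNReal.coe_ne_top

lemma integrable_norm_stdGaussian : Integrable (fun x : E => ‖x‖) (𝒩 E) :=
  ((memLp_id_stdGaussian 1).integrable le_rfl).norm

lemma integrable_norm_pow_stdGaussian (n : ℕ) : Integrable (fun x : E => ‖x‖ ^ n) (𝒩 E) :=
  (memLp_id_stdGaussian (n : ℝ≥0)).integrable_norm_pow'

lemma integral_inner_sq_stdGaussian (v : E) : ∫ x, inner ℝ v x ^ 2 ∂𝒩 E = ‖v‖ ^ 2 := by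
  have hvar := variance_dual_stdGaussian (innerSL ℝ v)
  rwa [variance_of_integral_eq_zero (by fun_prop) (integral_strongDual_stdGaussian _),
    innerSL_apply_norm] at hvar

lemma integral_norm_sq_stdGaussian : ∫ x, ‖x‖ ^ 2 ∂𝒩 E = finrank ℝ E := by
  let b := stdOrthonormalBasis ℝ E
  have hint (i) : Integrable (fun x => inner ℝ (b i) x ^ 2) (𝒩 E) :=
    (IsGaussian.memLp_dual _ (innerSL ℝ (b i)) 2 (by norm_num)).integrable_sq
  simp_rw [← b.sum_sq_inner_right]
  rw [integral_finsetSum _ fun i _ => hint i]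
  simp [integral_inner_sq_stdGaussian]

lemma integral_norm_stdGaussian_le : ∫ x, ‖x‖ ∂𝒩 E ≤ √(finrank ℝ E) := by
  have hvar := variance_nonneg (fun x : E => ‖x‖) (𝒩 E)
  have hmem : MemLp (fun x : E => ‖x‖) 2 (𝒩 E) := (memLp_id_stdGaussian 2).norm
  rw [variance_eq_sub hmem] at hvar
  refine Real.le_sqrt_of_sq_le ?_
  simpa [integral_norm_sq_stdGaussian] using hvar

lemma map_add_smul_stdGaussian_prod {a b : ℝ} (hab : a ^ 2 + b ^ 2 = 1) :
    ((𝒩 E).prod (𝒩 E)).map (fun p => a • p.1 + b • p.2) = 𝒩 E := by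
  have hmap : ((𝒩 E).prod (𝒩 E)).map (fun p => a • p.1 + b • p.2)
      = ((𝒩 E).map (a • ·)).conv ((𝒩 E).map (b • ·)) := by
    rw [Measure.conv, Measure.map_prod_map _ _ (by fun_prop) (by fun_prop),
      Measure.map_map (by fun_prop) (by fun_prop)]
    rfl
  rw [hmap]
  refine Measure.ext_of_charFun (funext fun t => ?_)
  rw [charFun_conv, charFun_map_smul, charFun_map_smul, charFun_stdGaussian, charFun_stdGaussian,
    charFun_stdGaussian, ← Complex.exp_add]
  congr 1
  have habC : (a : ℂ) ^ 2 + (b : ℂ) ^ 2 = 1 := by exact_mod_cast hab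
  simp only [norm_smul, mul_pow, Complex.ofReal_mul, Real.norm_eq_abs, ← Complex.ofReal_pow, sq_abs]
  push_cast
  linear_combination (-(‖t‖ ^ 2 : ℂ) / 2) * habC

lemma integrable_exp_neg_mul_norm_sq {b : ℝ} (hb : 0 < b) :
    Integrable fun x : E => exp (-b * ‖x‖ ^ 2) := by
  have := (GaussianFourier.integrable_cexp_neg_mul_sq_norm_add (V := E) (b := (b : ℂ))
    (by simpa using hb) 0 0).norm
  simpa [Complex.norm_exp, ← Complex.ofReal_pow] using this

lemma integral_gaussianDensity_mul_cexp (t : E) :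
    ∫ x : E, (gaussianDensity x : ℂ) * Complex.exp (inner ℝ x t * Complex.I)
      = Complex.exp (-‖t‖ ^ 2 / 2) := by
  have hnorm : (((2 * π) ^ (-(finrank ℝ E / 2 : ℝ)) : ℝ) : ℂ)
      * (π / ((1 / 2 : ℝ) : ℂ)) ^ ((finrank ℝ E : ℂ) / 2) = 1 := by
    have : (π / ((1 / 2 : ℝ) : ℂ)) ^ ((finrank ℝ E : ℂ) / 2)
        = (((2 * π) ^ (finrank ℝ E / 2 : ℝ) : ℝ) : ℂ) := by
      rw [Complex.ofReal_cpow (by positivity)]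
      push_cast
      congr 1
      ring
    rw [this, ← Complex.ofReal_mul, ← Real.rpow_add (by positivity)]
    simp
  have hexp (x : E) : (gaussianDensity x : ℂ) * Complex.exp (inner ℝ x t * Complex.I)
      = (((2 * π) ^ (-(finrank ℝ E / 2 : ℝ)) : ℝ) : ℂ)
        * Complex.exp (-((1 / 2 : ℝ) : ℂ) * ‖x‖ ^ 2 + Complex.I * inner ℝ t x) := by
    rw [gaussianDensity, Complex.exp_add, real_inner_comm]
    push_cast
    ring_nf
  simp_rw [hexp]
  rw [integral_const_mul, GaussianFourier.integral_cexp_neg_mul_sq_norm_add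
    (by rw [Complex.ofReal_re]; norm_num), ← mul_assoc, hnorm, one_mul]
  congr 1
  push_cast
  rw [Complex.I_sq]
  ring

lemma stdGaussian_eq_withDensity :
    𝒩 E = volume.withDensity fun x => ENNReal.ofReal (gaussianDensity x) := by
  have : IsFiniteMeasure ((volume : Measure E).withDensity
      fun x => ENNReal.ofReal (gaussianDensity x)) :=
    isFiniteMeasure_withDensity_ofReal
      ((integrable_exp_neg_mul_norm_sq (by norm_num)).const_mul _).2
  refine Measure.ext_of_charFun (funext fun t => ?_)
  rw [charFun_stdGaussian, charFun_apply, integral_withDensity_eq_integral_toReal_smul₀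
    (continuous_gaussianDensity.measurable.ennreal_ofReal).aemeasurable (by simp)]
  simp_rw [ENNReal.toReal_ofReal (gaussianDensity_pos _).le, Complex.real_smul]
  exact (integral_gaussianDensity_mul_cexp t).symm

end Gaussian

section Stein

open Filter Topology Laplacian

variable {E F : Type*} [NormedAddCommGroup E] [InnerProductSpace ℝ E] [FiniteDimensional ℝ E]
  [NormedAddCommGroup F] [NormedSpace ℝ F]

/-- The contraction `∑ i, A (e i) (e i)` of a bilinear map over an orthonormal basis: it turns the
second derivative of a map into its Laplacian and the derivative of a field of linear maps into its
divergence. -/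
def bilinTrace (A : E →L[ℝ] E →L[ℝ] F) : F :=
  ∑ i, A (stdOrthonormalBasis ℝ E i) (stdOrthonormalBasis ℝ E i)

lemma continuous_bilinTrace : Continuous (bilinTrace : (E →L[ℝ] E →L[ℝ] F) → F) := by
  unfold bilinTrace; fun_prop

lemma laplacian_eq_bilinTrace (φ : E → F) (x : E) :
    Δ φ x = bilinTrace (fderiv ℝ (fderiv ℝ φ) x) := by
  simp [InnerProductSpace.laplacian_eq_iteratedFDeriv_stdOrthonormalBasis, bilinTrace,
    iteratedFDeriv_two_apply]

lemma bilinTrace_fderiv_smul {χ : E → ℝ} {ψ : E → E →L[ℝ] F} {x : E}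
    (hχ : DifferentiableAt ℝ χ x) (hψ : DifferentiableAt ℝ ψ x) :
    bilinTrace (fderiv ℝ (fun z => χ z • ψ z) x)
      = χ x • bilinTrace (fderiv ℝ ψ x) + ψ x (gradient χ x) := by
  conv_rhs => rw [← (stdOrthonormalBasis ℝ E).sum_repr' (gradient χ x)]
  rw [fderiv_fun_smul hχ hψ]
  simp [bilinTrace, Finset.sum_add_distrib, Finset.smul_sum, inner_gradient_right]

lemma exists_smooth_cutoffs (E : Type*) [NormedAddCommGroup E] [InnerProductSpace ℝ E]
    [FiniteDimensional ℝ E] : ∃ χ : ℕ → E → ℝ, (∀ n, ContDiff ℝ 1 (χ n)) ∧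
      (∀ n, HasCompactSupport (χ n)) ∧ (∀ n x, |χ n x| ≤ 1) ∧
      (∀ x, Tendsto (fun n => χ n x) atTop (𝓝 1)) ∧
      ∃ C : ℝ, ∀ n x, ‖gradient (χ n) x‖ ≤ C / (n + 1) := by
  let β : ContDiffBump (0 : E) := ⟨1, 2, by norm_num, by norm_num⟩
  have hβ : ContDiff ℝ 1 (β : E → ℝ) := β.contDiff
  obtain ⟨C, hC⟩ := (hβ.continuous_fderiv (by norm_num)).bounded_above_of_compact_support
    (β.hasCompactSupport.fderiv (𝕜 := ℝ))
  have hpos (n : ℕ) : (0 : ℝ) < ((n : ℝ) + 1)⁻¹ := by positivity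
  refine ⟨fun n x => β (((n : ℝ) + 1)⁻¹ • x), fun n => hβ.comp (by fun_prop),
    fun n => β.hasCompactSupport.comp_homeomorph (Homeomorph.smulOfNeZero _ (hpos n).ne'),
    fun n x => (abs_of_nonneg β.nonneg).trans_le β.le_one, fun x => ?_, C, fun n x => ?_⟩
  · have hscale : Tendsto (fun n : ℕ => ((n : ℝ) + 1)⁻¹ • x) atTop (𝓝 0) := by
      simpa using (tendsto_one_div_add_atTop_nhds_zero_nat (𝕜 := ℝ)).smul_const x
    have h1 : (β : E → ℝ) 0 = 1 := β.one_of_mem_closedBall (by simp [β])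
    simpa [h1, Function.comp_def] using (hβ.continuous.tendsto 0).comp hscale
  · rw [gradient, LinearIsometryEquiv.norm_map, fderiv_comp_smul, norm_smul,
      Real.norm_of_nonneg (hpos n).le, div_eq_inv_mul]
    exact mul_le_mul_of_nonneg_left (hC _) (hpos n).le

variable [MeasurableSpace E] [BorelSpace E]

lemma integral_stdGaussian_eq (u : E → F) :
    ∫ x, u x ∂𝒩 E = ∫ x, gaussianDensity x • u x := by
  rw [stdGaussian_eq_withDensity, integral_withDensity_eq_integral_toReal_smul₀
    continuous_gaussianDensity.measurable.ennreal_ofReal.aemeasurable (by simp)]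
  simp_rw [ENNReal.toReal_ofReal (gaussianDensity_pos _).le]

lemma integral_inner_smul_stdGaussian {u : E → F} (hu : ContDiff ℝ 1 u)
    (hsupp : HasCompactSupport u) (v : E) :
    ∫ x, inner ℝ v x • u x ∂𝒩 E = ∫ x, fderiv ℝ u x v ∂𝒩 E := by
  have hint {w : E → F} (hw : Continuous w) (hwc : HasCompactSupport w) : Integrable w :=
    hw.integrable_of_hasCompactSupport hwc
  have hg : Continuous (gaussianDensity : E → ℝ) := continuous_gaussianDensity
  have hfderiv (x : E) : fderiv ℝ gaussianDensity x v = -(gaussianDensity x * inner ℝ v x) := by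
    simp [(hasFDerivAt_gaussianDensity x).fderiv, real_inner_comm]
  have key := integral_smul_fderiv_eq_neg_fderiv_smul_of_integrable (μ := volume)
    (f := gaussianDensity) (g := u) (v := v)
    (by simp_rw [hfderiv]; exact hint (by fun_prop) hsupp.smul_left)
    (hint (hg.smul ((hu.continuous_fderiv (by norm_num)).clm_apply continuous_const))
      (hsupp.fderiv_apply (𝕜 := ℝ) v).smul_left)
    (hint (by fun_prop) hsupp.smul_left)
    (fun x _ => (hasFDerivAt_gaussianDensity x).differentiableAt)
    (fun x _ => hu.differentiable (by norm_num) x)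
  rw [integral_stdGaussian_eq, integral_stdGaussian_eq, key, ← integral_neg]
  simp_rw [hfderiv, neg_smul, neg_neg, mul_smul]

lemma integral_apply_self_stdGaussian_of_hasCompactSupport {ψ : E → E →L[ℝ] F}
    (hψ : ContDiff ℝ 1 ψ) (hsupp : HasCompactSupport ψ) :
    ∫ x, ψ x x ∂𝒩 E = ∫ x, bilinTrace (fderiv ℝ ψ x) ∂𝒩 E := by
  let e := stdOrthonormalBasis ℝ E
  have : Continuous (fderiv ℝ ψ) := hψ.continuous_fderiv (by norm_num)
  have hcoord (i) : ContDiff ℝ 1 fun x => ψ x (e i) := hψ.clm_apply contDiff_const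
  have hcoord_supp (i) : HasCompactSupport fun x => ψ x (e i) :=
    hsupp.comp_left (g := fun A : E →L[ℝ] F => A (e i)) rfl
  have hfderiv (i) (x : E) : fderiv ℝ (fun z => ψ z (e i)) x (e i) = fderiv ℝ ψ x (e i) (e i) := by
    rw [fderiv_clm_apply (hψ.differentiable (by norm_num) x) (by fun_prop)]
    simp
  have hexpand (x : E) : ψ x x = ∑ i, inner ℝ (e i) x • ψ x (e i) := by
    simp_rw [← map_smul, ← map_sum, e.sum_repr' x]
  simp_rw [hexpand, bilinTrace]
  rw [integral_finsetSum _ fun i _ => ?_, integral_finsetSum _ fun i _ => ?_]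
  · refine Finset.sum_congr rfl fun i _ => ?_
    rw [integral_inner_smul_stdGaussian (hcoord i) (hcoord_supp i)]
    simp_rw [hfderiv, e]
  · refine Continuous.integrable_of_hasCompactSupport (by fun_prop) ?_
    exact (hsupp.fderiv (𝕜 := ℝ)).comp_left (g := fun A : E →L[ℝ] E →L[ℝ] F => A (e i) (e i)) rfl
  · have := (hcoord i).continuous
    exact Continuous.integrable_of_hasCompactSupport (by fun_prop) (hcoord_supp i).smul_left

lemma tendsto_integral_smul_of_tendsto_one {X : Type*} [MeasurableSpace X] {ν : Measure X}
    {χ : ℕ → X → ℝ} (hχ : ∀ n, AEStronglyMeasurable (χ n) ν) (hχ_le : ∀ n x, |χ n x| ≤ 1)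
    (hχ_lim : ∀ x, Tendsto (fun n => χ n x) atTop (𝓝 1)) {w : X → F} (hw : Integrable w ν) :
    Tendsto (fun n => ∫ x, χ n x • w x ∂ν) atTop (𝓝 (∫ x, w x ∂ν)) := by
  refine tendsto_integral_of_dominated_convergence (‖w ·‖) (fun n => (hχ n).smul hw.1) hw.norm
    (fun n => ae_of_all _ fun x => ?_)
    (ae_of_all _ fun x => by simpa using (hχ_lim x).smul_const (w x))
  simpa [norm_smul] using mul_le_mul_of_nonneg_right (hχ_le n x) (norm_nonneg (w x))

lemma integral_apply_self_stdGaussian {ψ : E → E →L[ℝ] F} (hψ : ContDiff ℝ 1 ψ) {K : ℝ}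
    (hK : ∀ x, ‖ψ x‖ ≤ K) (hint : Integrable (fun x => bilinTrace (fderiv ℝ ψ x)) (𝒩 E)) :
    ∫ x, ψ x x ∂𝒩 E = ∫ x, bilinTrace (fderiv ℝ ψ x) ∂𝒩 E := by
  obtain ⟨χ, hχ, hχ_supp, hχ_le, hχ_lim, C, hχ_grad⟩ := exists_smooth_cutoffs E
  have hχ_meas (n) := (hχ n).continuous.aestronglyMeasurable (μ := 𝒩 E)
  have hψ_cont := hψ.continuous
  have hself : Integrable (fun x => ψ x x) (𝒩 E) :=
    (integrable_norm_stdGaussian.const_mul K).mono'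
      (Continuous.aestronglyMeasurable (by fun_prop))
      (ae_of_all _ fun x => (ψ x).le_of_opNorm_le (hK x) x)
  have hgrad (n) (x : E) : ‖ψ x (gradient (χ n) x)‖ ≤ K * C * (1 / (n + 1)) := by
    rw [mul_assoc, mul_one_div]
    exact ContinuousLinearMap.le_of_opNorm_le_of_le _ (hK x) (hχ_grad n x)
  have hgrad_int (n) : Integrable (fun x => ψ x (gradient (χ n) x)) (𝒩 E) := by
    have hcont : Continuous (gradient (χ n)) :=
      (InnerProductSpace.toDual ℝ E).symm.continuous.comp ((hχ n).continuous_fderiv (by norm_num))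
    exact .of_bound (Continuous.aestronglyMeasurable (by fun_prop)) _ (ae_of_all _ (hgrad n))
  have hgrad_lim : Tendsto (fun n => ∫ x, ψ x (gradient (χ n) x) ∂𝒩 E) atTop (𝓝 0) :=
    squeeze_zero_norm (fun n => by
      simpa using norm_integral_le_of_norm_le_const (ae_of_all (𝒩 E) (hgrad n))) <| by
      simpa using (tendsto_one_div_add_atTop_nhds_zero_nat (𝕜 := ℝ)).const_mul (K * C)
  have hright : Tendsto (fun n => ∫ x, bilinTrace (fderiv ℝ (fun z => χ n z • ψ z) x) ∂𝒩 E) atTop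
      (𝓝 (∫ x, bilinTrace (fderiv ℝ ψ x) ∂𝒩 E)) := by
    rw [← add_zero (∫ x, bilinTrace (fderiv ℝ ψ x) ∂𝒩 E)]
    refine ((tendsto_integral_smul_of_tendsto_one hχ_meas hχ_le hχ_lim hint).add
      hgrad_lim).congr fun n => ?_
    have hχ_int : Integrable (fun x => χ n x • bilinTrace (fderiv ℝ ψ x)) (𝒩 E) :=
      hint.bdd_smul _ (hχ_meas n) (ae_of_all _ (hχ_le n))
    rw [← integral_add hχ_int (hgrad_int n)]
    simp_rw [bilinTrace_fderiv_smul ((hχ n).differentiable (by norm_num) _)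
      (hψ.differentiable (by norm_num) _)]
  refine tendsto_nhds_unique
    (tendsto_integral_smul_of_tendsto_one hχ_meas hχ_le hχ_lim hself) (hright.congr fun n => ?_)
  exact (integral_apply_self_stdGaussian_of_hasCompactSupport ((hχ n).smul hψ)
    (hχ_supp n).smul_right).symm

end Stein

section HeatSemigroup

open Filter Topology Laplacian

variable {E F : Type*} [NormedAddCommGroup E] [InnerProductSpace ℝ E] [FiniteDimensional ℝ E]
  [MeasurableSpace E] [BorelSpace E] [NormedAddCommGroup F]

lemma integrable_comp_add_smul_stdGaussian {w : E → F} (hw : Continuous w) {A : ℝ}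
    (hA : ∀ x, ‖w x‖ ≤ A * (1 + ‖x‖)) (y : E) (r : ℝ) :
    Integrable (fun x => w (y + r • x)) (𝒩 E) := by
  have hA0 : 0 ≤ A := by simpa using (norm_nonneg _).trans (hA 0)
  have hbound : Integrable (fun x : E => A * (1 + (‖y‖ + |r| * ‖x‖))) (𝒩 E) :=
    ((integrable_const _).add ((integrable_const _).add
      (integrable_norm_stdGaussian.const_mul _))).const_mul _
  refine hbound.mono' (Continuous.aestronglyMeasurable (by fun_prop)) (ae_of_all _ fun x => ?_)
  refine (hA _).trans ?_
  rw [← Real.norm_eq_abs r, ← norm_smul]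
  gcongr
  exact norm_add_le _ _

variable [NormedSpace ℝ F]

lemma norm_integral_comp_add_smul_stdGaussian_le {w : E → F} {A : ℝ}
    (hA : ∀ x, ‖w x‖ ≤ A * (1 + ‖x‖)) (y : E) {r : ℝ} (hr : 0 ≤ r) :
    ‖∫ x, w (y + r • x) ∂𝒩 E‖ ≤ A * (1 + ‖y‖ + r * √(finrank ℝ E)) := by
  have hA0 : 0 ≤ A := by simpa using (norm_nonneg _).trans (hA 0)
  have hr_int : Integrable (fun x : E => r * ‖x‖) (𝒩 E) := integrable_norm_stdGaussian.const_mul r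
  calc ‖∫ x, w (y + r • x) ∂𝒩 E‖ ≤ ∫ x, A * (1 + ‖y‖ + r * ‖x‖) ∂𝒩 E := by
        refine norm_integral_le_of_norm_le (((integrable_const _).add hr_int).const_mul _)
          (ae_of_all _ fun x => (hA _).trans ?_)
        rw [add_assoc, ← Real.norm_of_nonneg hr, ← norm_smul, Real.norm_of_nonneg hr]
        gcongr
        exact norm_add_le _ _
    _ = A * (1 + ‖y‖ + r * ∫ x, ‖x‖ ∂𝒩 E) := by
        rw [integral_const_mul, integral_add (integrable_const _) hr_int, integral_const_mul]
        simp
    _ ≤ A * (1 + ‖y‖ + r * √(finrank ℝ E)) := by gcongr; exact integral_norm_stdGaussian_le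

lemma hasDerivAt_integral_comp_add_smul_stdGaussian {φ : E → F} (hφ : ContDiff ℝ 1 φ) {K : ℝ}
    (hK : ∀ x, ‖fderiv ℝ φ x‖ ≤ K) (y : E) (s : ℝ) :
    HasDerivAt (fun s : ℝ => ∫ x, φ (y + s • x) ∂𝒩 E)
      (∫ x, fderiv ℝ φ (y + s • x) x ∂𝒩 E) s := by
  have hφ_cont := hφ.continuous
  have := hφ.continuous_fderiv (by norm_num)
  have hgrowth (x : E) : ‖φ x‖ ≤ (‖φ 0‖ + K) * (1 + ‖x‖) := by
    have hlip := Convex.norm_image_sub_le_of_norm_fderiv_le (𝕜 := ℝ) (s := Set.univ)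
      (fun z _ => hφ.differentiable (by norm_num) z) (fun z _ => hK z) convex_univ
      (Set.mem_univ 0) (Set.mem_univ x)
    rw [sub_zero] at hlip
    have := (norm_nonneg _).trans (hK 0)
    nlinarith [norm_sub_norm_le (φ x) (φ 0), norm_nonneg (φ 0), norm_nonneg x]
  refine (hasDerivAt_integral_of_dominated_loc_of_deriv_le (F := fun s x => φ (y + s • x))
    (F' := fun s x => fderiv ℝ φ (y + s • x) x) (bound := fun x => K * ‖x‖) univ_mem
    (.of_forall fun s => Continuous.aestronglyMeasurable (by fun_prop))
    (integrable_comp_add_smul_stdGaussian hφ_cont hgrowth y s)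
    (Continuous.aestronglyMeasurable (by fun_prop))
    (ae_of_all _ fun x s _ => ContinuousLinearMap.le_of_opNorm_le _ (hK _) _)
    (integrable_norm_stdGaussian.const_mul K) (ae_of_all _ fun x s _ => ?_)).2
  have hline : HasDerivAt (fun s : ℝ => y + s • x) x s := by
    simpa using ((hasDerivAt_id s).smul_const x).const_add y
  exact (hφ.differentiable (by norm_num) (y + s • x)).hasFDerivAt.comp_hasDerivAt s hline

lemma integral_fderiv_comp_add_smul_stdGaussian {φ : E → F} (hφ : ContDiff ℝ 2 φ) {K G : ℝ}
    (hK : ∀ x, ‖fderiv ℝ φ x‖ ≤ K) (hG : ∀ x, ‖Δ φ x‖ ≤ G * (1 + ‖x‖)) (y : E) (s : ℝ) :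
    ∫ x, fderiv ℝ φ (y + s • x) x ∂𝒩 E = s • ∫ x, Δ φ (y + s • x) ∂𝒩 E := by
  have hφ' : ContDiff ℝ 1 (fderiv ℝ φ) := hφ.fderiv_right (by norm_num)
  have hΔ_cont : Continuous (Δ φ) := by
    rw [funext (laplacian_eq_bilinTrace φ)]
    exact continuous_bilinTrace.comp (hφ'.continuous_fderiv (by norm_num))
  have hchain (x : E) : bilinTrace (fderiv ℝ (fun z => fderiv ℝ φ (y + s • z)) x)
      = s • Δ φ (y + s • x) := by
    rw [fderiv_comp_smul (f := fun z => fderiv ℝ φ (y + z)), fderiv_comp_add_left,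
      laplacian_eq_bilinTrace]
    simp [bilinTrace, Finset.smul_sum]
  rw [integral_apply_self_stdGaussian (ψ := fun x => fderiv ℝ φ (y + s • x))
    (hφ'.comp (by fun_prop)) (fun x => hK _)]
  · simp_rw [hchain, integral_smul]
  · simp_rw [hchain]
    exact (integrable_comp_add_smul_stdGaussian hΔ_cont hG y s).smul s

lemma norm_integral_comp_add_smul_stdGaussian_sub_le [CompleteSpace F] {φ : E → F}
    (hφ : ContDiff ℝ 2 φ) {K G : ℝ} (hK : ∀ x, ‖fderiv ℝ φ x‖ ≤ K)
    (hG : ∀ x, ‖Δ φ x‖ ≤ G * (1 + ‖x‖)) (y : E) {r : ℝ} (hr : 0 ≤ r) :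
    ‖∫ x, φ (y + r • x) ∂𝒩 E - φ y‖ ≤ G * (1 + ‖y‖ + r * √(finrank ℝ E)) * (r ^ 2 / 2) := by
  have hG0 : 0 ≤ G := by simpa using (norm_nonneg _).trans (hG 0)
  have hderiv (s : ℝ) : HasDerivAt (fun s : ℝ => ∫ x, φ (y + s • x) ∂𝒩 E - φ y)
      (s • ∫ x, Δ φ (y + s • x) ∂𝒩 E) s := by
    rw [← integral_fderiv_comp_add_smul_stdGaussian hφ hK hG]
    exact (hasDerivAt_integral_comp_add_smul_stdGaussian (hφ.of_le (by norm_num)) hK y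
      s).sub_const _
  refine image_norm_le_of_norm_deriv_right_le_deriv_boundary (a := 0)
    (B := fun s => G * (1 + ‖y‖ + r * √(finrank ℝ E)) * (s ^ 2 / 2))
    (B' := fun s => G * (1 + ‖y‖ + r * √(finrank ℝ E)) * s)
    (fun s _ => (hderiv s).continuousAt.continuousWithinAt) (fun s _ => (hderiv s).hasDerivWithinAt)
    (by simp) (fun s => by simpa using ((hasDerivAt_pow 2 s).div_const 2).const_mul _)
    (fun s hs => ?_) (Set.right_mem_Icc.2 hr)
  rw [norm_smul, Real.norm_of_nonneg hs.1, mul_comm]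
  gcongr
  · exact hs.1
  refine (norm_integral_comp_add_smul_stdGaussian_le hG y hs.1).trans ?_
  gcongr
  exact hs.2.le

end HeatSemigroup

section Wasserstein

lemma eLpNorm_two_sq {S F : Type*} [MeasurableSpace S] [NormedAddCommGroup F] (u : S → F)
    (ν : Measure S) : eLpNorm u 2 ν ^ 2 = ∫⁻ s, ‖u s‖ₑ ^ 2 ∂ν := by
  simpa using eLpNorm_nnreal_pow_eq_lintegral (f := u) (μ := ν) (p := 2) two_ne_zero

variable {α : Type*} [MeasurableSpace α]

/-- `γ` is a coupling of `μ` and `ν`, i.e. it has these two marginals. -/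
structure IsCoupling (γ : Measure (α × α)) (μ ν : Measure α) : Prop where
  map_fst : γ.map Prod.fst = μ
  map_snd : γ.map Prod.snd = ν

lemma IsCoupling.isProbabilityMeasure {γ : Measure (α × α)} {μ ν : Measure α}
    [IsProbabilityMeasure μ] (hγ : IsCoupling γ μ ν) : IsProbabilityMeasure γ :=
  have : IsProbabilityMeasure (γ.map Prod.fst) := hγ.map_fst ▸ ‹_›
  Measure.isProbabilityMeasure_of_map Prod.fst

lemma IsCoupling.prod {μ ν : Measure α} [IsProbabilityMeasure μ] [IsProbabilityMeasure ν] :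
    IsCoupling (μ.prod ν) μ ν :=
  ⟨Measure.fst_prod, Measure.snd_prod⟩

lemma IsCoupling.exists_gluing [StandardBorelSpace α] [Nonempty α] {γ₁₂ γ₂₃ : Measure (α × α)}
    [IsFiniteMeasure γ₁₂] [IsFiniteMeasure γ₂₃] {μ₁ μ₂ μ₃ : Measure α}
    (h₁₂ : IsCoupling γ₁₂ μ₁ μ₂) (h₂₃ : IsCoupling γ₂₃ μ₂ μ₃) :
    ∃ ρ : Measure ((α × α) × α), ρ.map Prod.fst = γ₁₂ ∧ ρ.map (Prod.map Prod.snd id) = γ₂₃ := by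
  refine ⟨γ₁₂ ⊗ₘ γ₂₃.condKernel.comap Prod.snd measurable_snd, Measure.fst_compProd _ _, ?_⟩
  have hfst : γ₁₂.map Prod.snd = γ₂₃.fst := h₁₂.map_snd.trans h₂₃.map_fst.symm
  conv_rhs => rw [← γ₂₃.disintegrate γ₂₃.condKernel, ← hfst]
  refine Measure.ext_of_lintegral _ fun g hg => ?_
  rw [lintegral_map hg (by fun_prop), Measure.lintegral_compProd (by fun_prop),
    Measure.lintegral_compProd hg, lintegral_map (by fun_prop) measurable_snd]
  rfl

variable [NormedAddCommGroup α]

/-- The 2-Wasserstein distance as an extended nonnegative real, so that no finiteness is needed in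
the triangle inequality. -/
def eW2 (μ ν : Measure α) : ℝ≥0∞ :=
  ⨅ (γ : Measure (α × α)) (_ : IsCoupling γ μ ν), eLpNorm (fun p => p.1 - p.2) 2 γ

lemma IsCoupling.eW2_le {γ : Measure (α × α)} {μ ν : Measure α} (hγ : IsCoupling γ μ ν) :
    eW2 μ ν ≤ eLpNorm (fun p => p.1 - p.2) 2 γ :=
  iInf₂_le γ hγ

lemma eW2_sq (μ ν : Measure α) :
    eW2 μ ν ^ 2 = ⨅ (γ : Measure (α × α)) (_ : IsCoupling γ μ ν), ∫⁻ p, ‖p.1 - p.2‖ₑ ^ 2 ∂γ := by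
  simp_rw [← eLpNorm_two_sq]
  exact (ENNReal.powOrderIso 2 two_ne_zero).map_iInf₂ _

lemma IsCoupling.eW2_sq_le {γ : Measure (α × α)} {μ ν : Measure α} (hγ : IsCoupling γ μ ν) :
    eW2 μ ν ^ 2 ≤ ∫⁻ p, ‖p.1 - p.2‖ₑ ^ 2 ∂γ :=
  (eW2_sq μ ν).trans_le (iInf₂_le γ hγ)

lemma W2_eq_toReal_eW2 (μ ν : Measure α) [IsProbabilityMeasure μ] :
    W2 μ ν = (eW2 μ ν).toReal := by
  have hset (γ : Measure (α × α)) :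
      γ ∈ {γ : Measure (α × α) |
        IsProbabilityMeasure γ ∧ γ.map Prod.fst = μ ∧ γ.map Prod.snd = ν} ↔ IsCoupling γ μ ν :=
    ⟨fun h => ⟨h.2.1, h.2.2⟩, fun h => ⟨h.isProbabilityMeasure, h.map_fst, h.map_snd⟩⟩
  rw [W2, Real.sqrt_eq_iff_mul_self_eq ENNReal.toReal_nonneg ENNReal.toReal_nonneg, ← sq,
    ← ENNReal.toReal_pow, eW2_sq]
  simp_rw [hset]
  rfl

lemma eW2_lt_top [SecondCountableTopology α] {μ ν : Measure α} [IsProbabilityMeasure μ]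
    [IsProbabilityMeasure ν] (hμ : MemLp id 2 μ) (hν : MemLp id 2 ν) : eW2 μ ν < ⊤ :=
  IsCoupling.prod.eW2_le.trans_lt ((hμ.comp_fst ν).sub (hν.comp_snd μ)).eLpNorm_lt_top

variable [BorelSpace α] [SecondCountableTopology α]

lemma eW2_self (μ : Measure α) : eW2 μ μ = 0 := by
  have hdiag : IsCoupling (μ.map fun x => (x, x)) μ μ := by
    constructor <;> rw [Measure.map_map (by fun_prop) (by fun_prop)] <;> exact Measure.map_id
  refine le_antisymm (hdiag.eW2_le.trans_eq ?_) zero_le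
  have hdiff : Measurable fun p : α × α => p.1 - p.2 := by fun_prop
  rw [eLpNorm_map_measure hdiff.aestronglyMeasurable (by fun_prop)]
  simp [Function.comp_def]

lemma eW2_triangle [CompleteSpace α] (μ₁ μ₂ μ₃ : Measure α) [IsProbabilityMeasure μ₁]
    [IsProbabilityMeasure μ₂] : eW2 μ₁ μ₃ ≤ eW2 μ₁ μ₂ + eW2 μ₂ μ₃ := by
  refine ENNReal.le_iInf₂_add_iInf₂ fun γ₁₂ h₁₂ γ₂₃ h₂₃ => ?_
  have := h₁₂.isProbabilityMeasure
  have := h₂₃.isProbabilityMeasure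
  obtain ⟨ρ, hρ₁₂, hρ₂₃⟩ := h₁₂.exists_gluing h₂₃
  have h₁₃ : IsCoupling (ρ.map fun q => (q.1.1, q.2)) μ₁ μ₃ := by
    constructor <;> rw [Measure.map_map (by fun_prop) (by fun_prop)]
    · rw [← h₁₂.map_fst, ← hρ₁₂, Measure.map_map (by fun_prop) (by fun_prop)]; rfl
    · rw [← h₂₃.map_snd, ← hρ₂₃, Measure.map_map (by fun_prop) (by fun_prop)]; rfl
  calc eW2 μ₁ μ₃ ≤ eLpNorm (fun p => p.1 - p.2) 2 (ρ.map fun q => (q.1.1, q.2)) :=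
        h₁₃.eW2_le
    _ = eLpNorm (fun q => (q.1.1 - q.1.2) + (q.1.2 - q.2)) 2 ρ := by
        rw [eLpNorm_map_measure (by fun_prop) (by fun_prop)]
        simp [Function.comp_def]
    _ ≤ eLpNorm (fun q => q.1.1 - q.1.2) 2 ρ + eLpNorm (fun q => q.1.2 - q.2) 2 ρ :=
        eLpNorm_add_le (by fun_prop) (by fun_prop) one_le_two
    _ = eLpNorm (fun p => p.1 - p.2) 2 γ₁₂ + eLpNorm (fun p => p.1 - p.2) 2 γ₂₃ := by
        rw [← hρ₁₂, ← hρ₂₃, eLpNorm_map_measure (by fun_prop) (by fun_prop),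
          eLpNorm_map_measure (by fun_prop) (by fun_prop)]
        rfl

lemma eW2_sq_map_prod_le {S α' : Type*} [MeasurableSpace S] [MeasurableSpace α']
    [NormedAddCommGroup α'] [BorelSpace α'] [SecondCountableTopology α'] {T T' : α × S → α'}
    (hT : Measurable T) (hT' : Measurable T') {ω : Measure S} [IsProbabilityMeasure ω]
    {μ ν : Measure α} [IsProbabilityMeasure μ] [IsProbabilityMeasure ν] {c : ℝ≥0∞} (hc : c ≠ ⊤)
    {g : α → ℝ≥0∞} (hg : Measurable g)
    (h : ∀ x y, ∫⁻ s, ‖T (x, s) - T' (y, s)‖ₑ ^ 2 ∂ω ≤ c * ‖x - y‖ₑ ^ 2 + g y) :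
    eW2 ((μ.prod ω).map T) ((ν.prod ω).map T') ^ 2 ≤ c * eW2 μ ν ^ 2 + ∫⁻ y, g y ∂ν := by
  have : Nonempty {γ // IsCoupling γ μ ν} := ⟨μ.prod ν, .prod⟩
  rw [eW2_sq μ ν, iInf_subtype', ENNReal.mul_iInf (by simp [hc]), ENNReal.iInf_add]
  refine le_iInf fun ⟨γ, hγ⟩ => ?_
  have := hγ.isProbabilityMeasure
  have hcoupling : IsCoupling ((γ.prod ω).map fun q => (T (q.1.1, q.2), T' (q.1.2, q.2)))
      ((μ.prod ω).map T) ((ν.prod ω).map T') := by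
    constructor <;> rw [Measure.map_map (by fun_prop) (by fun_prop)]
    · rw [← hγ.map_fst, ← Measure.map_id (μ := ω), Measure.map_prod_map _ _ (by fun_prop)
        (by fun_prop), Measure.map_map hT (by fun_prop), Measure.map_id]
      rfl
    · rw [← hγ.map_snd, ← Measure.map_id (μ := ω), Measure.map_prod_map _ _ (by fun_prop)
        (by fun_prop), Measure.map_map hT' (by fun_prop), Measure.map_id]
      rfl
  calc eW2 ((μ.prod ω).map T) ((ν.prod ω).map T') ^ 2
      ≤ ∫⁻ p, ∫⁻ s, ‖T (p.1, s) - T' (p.2, s)‖ₑ ^ 2 ∂ω ∂γ := by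
        refine hcoupling.eW2_sq_le.trans_eq ?_
        rw [lintegral_map (by fun_prop) (by fun_prop), lintegral_prod _ (by fun_prop)]
    _ ≤ ∫⁻ p, (c * ‖p.1 - p.2‖ₑ ^ 2 + g p.2) ∂γ := lintegral_mono fun p => h p.1 p.2
    _ = c * ∫⁻ p, ‖p.1 - p.2‖ₑ ^ 2 ∂γ + ∫⁻ y, g y ∂ν := by
        rw [lintegral_add_right _ (by fun_prop), lintegral_const_mul _ (by fun_prop), ← hγ.map_snd,
          lintegral_map hg measurable_snd]

end Wasserstein

section Langevin

variable {E : Type*} [NormedAddCommGroup E] [InnerProductSpace ℝ E]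

lemma lintegral_enorm_sq_eq_ofReal {S F : Type*} [MeasurableSpace S] [NormedAddCommGroup F]
    {ω : Measure S} {u : S → F} (hu : MemLp u 2 ω) :
    ∫⁻ s, ‖u s‖ₑ ^ 2 ∂ω = ENNReal.ofReal (∫ s, ‖u s‖ ^ 2 ∂ω) := by
  rw [ofReal_integral_eq_lintegral_ofReal (hu.integrable_norm_pow two_ne_zero)
    (ae_of_all _ fun s => by positivity)]
  simp_rw [ENNReal.ofReal_pow (norm_nonneg _), ofReal_norm]

lemma integral_norm_add_sq_le [CompleteSpace E] {S : Type*} [MeasurableSpace S] {ω : Measure S}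
    [IsProbabilityMeasure ω] {Z : S → E} (hZ : MemLp Z 2 ω) (u c : E) :
    ∫ s, ‖u + Z s‖ ^ 2 ∂ω ≤ ‖u + ∫ s, Z s ∂ω‖ ^ 2 + ∫ s, ‖Z s - c‖ ^ 2 ∂ω := by
  have hZ_int : Integrable Z ω := hZ.integrable one_le_two
  have hsq_int : Integrable (fun s => ‖Z s - c‖ ^ 2) ω :=
    (hZ.sub (memLp_const c)).integrable_norm_pow two_ne_zero
  have hexpand (z : E) :
      ‖u + z‖ ^ 2 = ‖z - c‖ ^ 2 + (2 * inner ℝ (u + c) z + (‖u‖ ^ 2 - ‖c‖ ^ 2)) := by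
    rw [norm_add_sq_real, norm_sub_sq_real, inner_add_left, real_inner_comm z c]
    ring
  have hsq := sq_nonneg ‖(∫ s, Z s ∂ω) - c‖
  have hinner_int : Integrable (fun s => 2 * inner ℝ (u + c) (Z s)) ω :=
    (hZ_int.const_inner _).const_mul 2
  have haffine_int : Integrable (fun s => 2 * inner ℝ (u + c) (Z s) + (‖u‖ ^ 2 - ‖c‖ ^ 2)) ω :=
    hinner_int.add (integrable_const _)
  simp_rw [hexpand]
  rw [integral_add hsq_int haffine_int, integral_add hinner_int (integrable_const _),
    integral_const_mul, integral_inner hZ_int, integral_const, probReal_univ, one_smul]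
  linarith

/-- An `L`-Lipschitz drift vanishing at `0` whose Euler steps `x ↦ x - h • b x` contract at rate `m`
as long as `h ≤ 1 / L`. The gradient of an `m`-strongly convex and `L`-smooth function minimal at
`0` is the example. -/
structure IsContractiveDrift (m L : ℝ) (b : E → E) : Prop where
  map_zero : b 0 = 0
  norm_sub_le : ∀ x y, ‖b x - b y‖ ≤ L * ‖x - y‖
  norm_euler_sub_le : ∀ h, 0 ≤ h → h * L ≤ 1 → ∀ x y,
    ‖x - y - h • (b x - b y)‖ ≤ (1 - m * h) * ‖x - y‖

/-- One step of the Langevin Monte Carlo algorithm with drift `-b` and step size `h`, as a function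
of the current state and the standard Gaussian noise. -/
def lmcStep (b : E → E) (h : ℝ) (p : E × E) : E := p.1 - h • b p.1 + √(2 * h) • p.2

lemma lmcStep_half (b : E → E) (h : ℝ) (y s : E) :
    lmcStep b (h / 2) (y, s) = y - (h / 2) • b y + √h • s := by
  rw [lmcStep, mul_div_cancel₀ h two_ne_zero]

namespace IsContractiveDrift

variable {m L h : ℝ} {b : E → E}

lemma norm_le (hb : IsContractiveDrift m L b) (x : E) : ‖b x‖ ≤ L * ‖x‖ := by
  simpa [hb.map_zero] using hb.norm_sub_le x 0

lemma norm_euler_le (hb : IsContractiveDrift m L b) (hh : 0 ≤ h) (hhL : h * L ≤ 1) (x : E) :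
    ‖x - h • b x‖ ≤ (1 - m * h) * ‖x‖ := by
  simpa [hb.map_zero] using hb.norm_euler_sub_le h hh hhL x 0

lemma lipschitzWith (hb : IsContractiveDrift m L b) : LipschitzWith L.toNNReal b :=
  LipschitzWith.of_dist_le' fun x y => by
    rw [dist_eq_norm, dist_eq_norm]
    exact hb.norm_sub_le x y

lemma continuous (hb : IsContractiveDrift m L b) : Continuous b := hb.lipschitzWith.continuous

end IsContractiveDrift

variable [FiniteDimensional ℝ E] [MeasurableSpace E] [BorelSpace E]

/-- The law after one Langevin Monte Carlo step started from `ν`. -/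
def lmcLaw (b : E → E) (h : ℝ) (ν : Measure E) : Measure E := (ν.prod (𝒩 E)).map (lmcStep b h)

lemma measurable_lmcStep {b : E → E} (hb : Measurable b) (h : ℝ) : Measurable (lmcStep b h) := by
  unfold lmcStep; fun_prop

variable {m L h : ℝ} {b : E → E} {μ ν : Measure E}

lemma isProbabilityMeasure_lmcLaw [IsProbabilityMeasure ν] (hb : Measurable b) :
    IsProbabilityMeasure (lmcLaw b h ν) :=
  Measure.isProbabilityMeasure_map (measurable_lmcStep hb h).aemeasurable

lemma isProbabilityMeasure_iterate_lmcLaw [IsProbabilityMeasure ν] (hb : Measurable b) (k : ℕ) :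
    IsProbabilityMeasure ((lmcLaw b h)^[k] ν) := by
  induction k with
  | zero => assumption
  | succ k ih =>
    rw [Function.iterate_succ_apply']
    exact isProbabilityMeasure_lmcLaw hb

lemma eW2_lmcLaw_le [IsProbabilityMeasure μ] [IsProbabilityMeasure ν]
    (hb : IsContractiveDrift m L b) (hh : 0 ≤ h) (hhL : h * L ≤ 1) :
    eW2 (lmcLaw b h μ) (lmcLaw b h ν) ≤ ENNReal.ofReal (1 - m * h) * eW2 μ ν := by
  have hT := measurable_lmcStep hb.continuous.measurable h
  rw [lmcLaw, lmcLaw, ← ENNReal.pow_le_pow_left_iff two_ne_zero, mul_pow]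
  have key := eW2_sq_map_prod_le (μ := μ) (ν := ν) (ω := 𝒩 E) (g := 0) hT hT
    (c := ENNReal.ofReal (1 - m * h) ^ 2) (by finiteness) measurable_zero fun x y => ?_
  · simpa using key
  have hsub (s : E) : lmcStep b h (x, s) - lmcStep b h (y, s) = x - y - h • (b x - b y) := by
    simp only [lmcStep]; module
  simp only [hsub, lintegral_const, measure_univ, mul_one, Pi.zero_apply, add_zero, ← mul_pow]
  gcongr
  rw [← ofReal_norm, ← ofReal_norm, ← ENNReal.ofReal_mul' (norm_nonneg _)]
  exact ENNReal.ofReal_le_ofReal (hb.norm_euler_sub_le h hh hhL x y)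

lemma lintegral_enorm_sq_lmcStep_le (hb : IsContractiveDrift m L b) (hm : 0 ≤ m) (hh : 0 ≤ h)
    (hhL : h * L ≤ 1) (hmh : m * h ≤ 1) (x : E) :
    ∫⁻ s, ‖lmcStep b h (x, s)‖ₑ ^ 2 ∂𝒩 E ≤
      ENNReal.ofReal (1 - m * h) * ‖x‖ₑ ^ 2 + ENNReal.ofReal (2 * h * finrank ℝ E) := by
  have hnoise : MemLp (fun s => √(2 * h) • s) 2 (𝒩 E) := (memLp_id_stdGaussian 2).const_smul _
  have hmean : ∫ s, √(2 * h) • s ∂𝒩 E = 0 := by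
    rw [integral_smul, integral_id_stdGaussian, smul_zero]
  have hvar : ∫ s, ‖√(2 * h) • s - 0‖ ^ 2 ∂𝒩 E = 2 * h * finrank ℝ E := by
    simp_rw [sub_zero, norm_smul, mul_pow, Real.norm_eq_abs, sq_abs]
    rw [integral_const_mul, integral_norm_sq_stdGaussian, Real.sq_sqrt (by positivity)]
  have hmem : MemLp (fun s => x - h • b x + √(2 * h) • s) 2 (𝒩 E) :=
    (memLp_const (x - h • b x)).add hnoise
  simp only [lmcStep]
  rw [lintegral_enorm_sq_eq_ofReal hmem, ← ofReal_norm, ← ENNReal.ofReal_pow (norm_nonneg _),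
    ← ENNReal.ofReal_mul (by linarith),
    ← ENNReal.ofReal_add (by nlinarith [sq_nonneg ‖x‖]) (by positivity)]
  refine ENNReal.ofReal_le_ofReal ((integral_norm_add_sq_le hnoise (x - h • b x) 0).trans ?_)
  rw [hmean, hvar, add_zero]
  gcongr
  calc ‖x - h • b x‖ ^ 2 ≤ ((1 - m * h) * ‖x‖) ^ 2 := by gcongr; exact hb.norm_euler_le hh hhL x
    _ ≤ (1 - m * h) * ‖x‖ ^ 2 := by
        rw [mul_pow]
        gcongr
        nlinarith [mul_nonneg hm hh]

lemma lintegral_enorm_sq_lmcLaw_le [IsProbabilityMeasure ν] (hb : IsContractiveDrift m L b)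
    (hm : 0 ≤ m) (hh : 0 ≤ h) (hhL : h * L ≤ 1) (hmh : m * h ≤ 1) :
    ∫⁻ x, ‖x‖ₑ ^ 2 ∂lmcLaw b h ν ≤
      ENNReal.ofReal (1 - m * h) * ∫⁻ x, ‖x‖ₑ ^ 2 ∂ν + ENNReal.ofReal (2 * h * finrank ℝ E) := by
  have hT := measurable_lmcStep hb.continuous.measurable h
  rw [lmcLaw, lintegral_map (by fun_prop) hT, lintegral_prod _ (by fun_prop)]
  refine (lintegral_mono (lintegral_enorm_sq_lmcStep_le hb hm hh hhL hmh)).trans_eq ?_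
  rw [lintegral_add_right _ (by fun_prop), lintegral_const_mul _ (by fun_prop), lintegral_const,
    measure_univ, mul_one]

lemma le_max_of_succ_le {u : ℕ → ℝ≥0∞} {r s B : ℝ≥0∞} (hrs : r + s ≤ 1)
    (hu : ∀ k, u (k + 1) ≤ r * u k + s * B) (k : ℕ) : u k ≤ max (u 0) B := by
  induction k with
  | zero => exact le_max_left _ _
  | succ k ih =>
    calc u (k + 1) ≤ r * max (u 0) B + s * max (u 0) B :=
          (hu k).trans (by gcongr; exact le_max_right _ _)
      _ ≤ max (u 0) B := by rw [← add_mul]; exact mul_le_of_le_one_left' hrs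

lemma lintegral_enorm_sq_iterate_lmcLaw_le [IsProbabilityMeasure ν] (hb : IsContractiveDrift m L b)
    (hm : 0 < m) (hh : 0 ≤ h) (hhL : h * L ≤ 1) (hmh : m * h ≤ 1) (k : ℕ) :
    ∫⁻ x, ‖x‖ₑ ^ 2 ∂(lmcLaw b h)^[k] ν ≤
      ∫⁻ x, ‖x‖ₑ ^ 2 ∂ν + ENNReal.ofReal (2 * finrank ℝ E / m) := by
  have hmh0 : 0 ≤ m * h := by positivity
  refine (le_max_of_succ_le (u := fun k => ∫⁻ x, ‖x‖ₑ ^ 2 ∂(lmcLaw b h)^[k] ν)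
    (r := ENNReal.ofReal (1 - m * h)) (s := ENNReal.ofReal (m * h))
    (B := ENNReal.ofReal (2 * finrank ℝ E / m)) ?_ (fun k => ?_) k).trans
    (max_le_add_of_nonneg zero_le zero_le)
  · rw [← ENNReal.ofReal_add (by linarith) hmh0]; simp
  · have := isProbabilityMeasure_iterate_lmcLaw (ν := ν) (h := h) hb.continuous.measurable k
    rw [Function.iterate_succ_apply', ← ENNReal.ofReal_mul hmh0]
    refine (lintegral_enorm_sq_lmcLaw_le hb hm.le hh hhL hmh).trans_eq ?_
    congr 2
    field_simp

end Langevin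

section StepDoubling

open Laplacian

variable {E : Type*} [NormedAddCommGroup E] [InnerProductSpace ℝ E] [FiniteDimensional ℝ E]
  [MeasurableSpace E] [BorelSpace E] {m L G h : ℝ} {b : E → E} {μ ν : Measure E}

lemma lmcLaw_eq_map_prod_prod [SFinite ν] (hb : Measurable b) :
    lmcLaw b h ν = (ν.prod ((𝒩 E).prod (𝒩 E))).map
      fun q => q.1 - h • b q.1 + √h • (q.2.1 + q.2.2) := by
  have hgauss : ((𝒩 E).prod (𝒩 E)).map (fun p => (√2)⁻¹ • p.1 + (√2)⁻¹ • p.2) = 𝒩 E :=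
    map_add_smul_stdGaussian_prod (by rw [inv_pow, Real.sq_sqrt zero_le_two]; norm_num)
  have hsmul (v : E) : √(2 * h) • (√2)⁻¹ • v = √h • v := by
    rw [smul_smul, Real.sqrt_mul zero_le_two]
    congr 1
    field_simp
  rw [lmcLaw]
  conv_lhs => rw [← hgauss, ← Measure.map_id (μ := ν)]
  rw [Measure.map_prod_map _ _ measurable_id (by fun_prop),
    Measure.map_map (measurable_lmcStep hb h) (by fun_prop)]
  simp only [Function.comp_def, Prod.map, id, lmcStep, ← smul_add, hsmul]

lemma lmcLaw_lmcLaw_eq_map_prod_prod [IsProbabilityMeasure ν] (hb : Measurable b) :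
    lmcLaw b h (lmcLaw b h ν) = (ν.prod ((𝒩 E).prod (𝒩 E))).map
      fun q => lmcStep b h (lmcStep b h (q.1, q.2.1), q.2.2) := by
  have hT := measurable_lmcStep hb h
  rw [lmcLaw, lmcLaw]
  conv_lhs => rw [← Measure.map_id (μ := 𝒩 E)]
  rw [Measure.map_prod_map _ _ hT measurable_id, Measure.map_map hT (by fun_prop), Measure.map_id,
    ← Measure.prodAssoc_prod, Measure.map_map (by fun_prop) (by fun_prop)]
  rfl

lemma norm_integral_drift_sub_le (hb : IsContractiveDrift m L b) (hb2 : ContDiff ℝ 2 b)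
    (hΔ : ∀ x, ‖Δ b x‖ ≤ G * (1 + ‖x‖)) (hm : 0 ≤ m) (hL : 0 ≤ L) (hh : 0 ≤ h)
    (hhL : h * L ≤ 1) (y : E) :
    ‖∫ s, b (lmcStep b (h / 2) (y, s)) ∂𝒩 E - b y‖ ≤
      h / 2 * ((L ^ 2 + G) * (1 + ‖y‖ + √(h * finrank ℝ E))) := by
  have hG : 0 ≤ G := by simpa using (norm_nonneg _).trans (hΔ 0)
  have hfderiv (x : E) : ‖fderiv ℝ b x‖ ≤ L := by
    simpa [hL] using norm_fderiv_le_of_lipschitz ℝ hb.lipschitzWith (x₀ := x)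
  let z := y - (h / 2) • b y
  have hz : ‖z‖ ≤ ‖y‖ := (hb.norm_euler_le (by positivity) (by nlinarith) y).trans
    (mul_le_of_le_one_left (norm_nonneg _) (by nlinarith))
  have hheat : ‖∫ s, b (z + √h • s) ∂𝒩 E - b z‖ ≤ G * (1 + ‖y‖ + √(h * finrank ℝ E)) * (h / 2) := by
    have := norm_integral_comp_add_smul_stdGaussian_sub_le hb2 hfderiv hΔ z (Real.sqrt_nonneg h)
    rw [Real.sq_sqrt hh, ← Real.sqrt_mul hh] at this
    refine this.trans ?_
    gcongr
  have hdrift : ‖b z - b y‖ ≤ L ^ 2 * (1 + ‖y‖ + √(h * finrank ℝ E)) * (h / 2) := by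
    calc ‖b z - b y‖ ≤ L * ‖z - y‖ := hb.norm_sub_le z y
      _ = L * (h / 2 * ‖b y‖) := by
          rw [sub_sub_cancel_left, norm_neg, norm_smul, Real.norm_of_nonneg (by positivity)]
      _ ≤ L * (h / 2 * (L * ‖y‖)) := by gcongr; exact hb.norm_le y
      _ = L ^ 2 * ‖y‖ * (h / 2) := by ring
      _ ≤ L ^ 2 * (1 + ‖y‖ + √(h * finrank ℝ E)) * (h / 2) := by
          gcongr
          linarith [Real.sqrt_nonneg (h * finrank ℝ E)]
  simp_rw [lmcStep_half]
  linarith [norm_sub_le_norm_sub_add_norm_sub (∫ s, b (z + √h • s) ∂𝒩 E) (b z) (b y)]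

lemma integral_norm_drift_sub_sq_le (hb : IsContractiveDrift m L b) (hh : 0 ≤ h) (z : E) :
    ∫ s, ‖b (z + √h • s) - b z‖ ^ 2 ∂𝒩 E ≤ L ^ 2 * (h * finrank ℝ E) := by
  have hint : Integrable (fun s : E => L ^ 2 * (h * ‖s‖ ^ 2)) (𝒩 E) :=
    ((integrable_norm_pow_stdGaussian 2).const_mul h).const_mul _
  calc ∫ s, ‖b (z + √h • s) - b z‖ ^ 2 ∂𝒩 E ≤ ∫ s, L ^ 2 * (h * ‖s‖ ^ 2) ∂𝒩 E := by
        refine integral_mono_of_nonneg (ae_of_all _ fun s => by positivity) hint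
          (ae_of_all _ fun s => ?_)
        calc ‖b (z + √h • s) - b z‖ ^ 2 ≤ (L * (√h * ‖s‖)) ^ 2 := by
              gcongr
              simpa [norm_smul, abs_of_nonneg] using hb.norm_sub_le (z + √h • s) z
          _ = L ^ 2 * (h * ‖s‖ ^ 2) := by rw [mul_pow, mul_pow, Real.sq_sqrt hh]
    _ = L ^ 2 * (h * finrank ℝ E) := by
        rw [integral_const_mul, integral_const_mul, integral_norm_sq_stdGaussian]

lemma sq_one_sub_mul_add_le {D a : ℝ} (hm : 0 < m) (hh : 0 ≤ h) (hmh : m * h ≤ 1) :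
    ((1 - m * h) * D + h / 2 * a) ^ 2 ≤ (1 - m * h) * D ^ 2 + h / (4 * m) * a ^ 2 := by
  have hcross : 0 ≤ m * h * (1 - m * h) * (D - a / (2 * m)) ^ 2 :=
    mul_nonneg (mul_nonneg (by positivity) (by linarith)) (sq_nonneg _)
  have hid : (1 - m * h) * D ^ 2 + h / (4 * m) * a ^ 2 - ((1 - m * h) * D + h / 2 * a) ^ 2
      = m * h * (1 - m * h) * (D - a / (2 * m)) ^ 2 := by field_simp; ring
  linarith

lemma doubling_error_le {K d r : ℝ} (hm : 0 < m) (hmL : m ≤ L) (hh : 0 ≤ h) (hmh : m * h ≤ 1)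
    (hd : 0 ≤ d) (hK : L ^ 2 ≤ K) :
    h / (4 * m) * (h / 2 * (K * (1 + r + √(h * d)))) ^ 2 + (h / 2) ^ 2 * (L ^ 2 * (h * d)) ≤
      h ^ 3 * K ^ 2 / (4 * m) * (1 + r ^ 2 + 2 * d / m) := by
  have hhd : h * d ≤ d / m := by rw [le_div_iff₀ hm]; nlinarith
  have hbias : (1 + r + √(h * d)) ^ 2 ≤ 3 * (1 + r ^ 2 + d / m) := by
    nlinarith [sq_nonneg (1 - r), sq_nonneg (1 - √(h * d)), sq_nonneg (r - √(h * d)),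
      Real.sq_sqrt (mul_nonneg hh hd)]
  have hvar : L ^ 2 * d ≤ K ^ 2 / m * (d / m) := by
    have : L ^ 2 * m ^ 2 ≤ K ^ 2 := by nlinarith [sq_nonneg L, pow_le_pow_left₀ hm.le hmL 2]
    rw [div_mul_div_comm, le_div_iff₀ (by positivity)]
    nlinarith
  calc _ = h ^ 3 / 4 * (K ^ 2 / m * ((1 + r + √(h * d)) ^ 2 / 4) + L ^ 2 * d) := by
        field_simp; ring
    _ ≤ h ^ 3 / 4 * (K ^ 2 / m * (3 * (1 + r ^ 2 + d / m) / 4) + K ^ 2 / m * (d / m)) := by gcongr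
    _ = h ^ 3 * K ^ 2 / (4 * m) * (3 / 4 * (1 + r ^ 2 + d / m) + d / m) := by ring
    _ ≤ h ^ 3 * K ^ 2 / (4 * m) * (1 + r ^ 2 + 2 * d / m) := by
        refine mul_le_mul_of_nonneg_left ?_ (by positivity)
        have : 0 ≤ d / m := by positivity
        rw [mul_div_assoc]
        nlinarith

lemma memLp_drift_lmcStep_half (hb : IsContractiveDrift m L b) (y : E) :
    MemLp (fun s => b (lmcStep b (h / 2) (y, s))) 2 (𝒩 E) := by
  have hstep : MemLp (fun s : E => y - (h / 2) • b y + √h • s) 2 (𝒩 E) :=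
    (memLp_const (y - (h / 2) • b y)).add ((memLp_id_stdGaussian 2).const_smul √h)
  have hb_cont := hb.continuous
  simp_rw [lmcStep_half]
  exact hstep.of_le_mul (Continuous.aestronglyMeasurable (by fun_prop))
    (ae_of_all _ fun s => hb.norm_le _)

lemma integral_norm_lmcStep_sub_sq_le (hb : IsContractiveDrift m L b) (hb2 : ContDiff ℝ 2 b)
    (hΔ : ∀ x, ‖Δ b x‖ ≤ G * (1 + ‖x‖)) (hm : 0 < m) (hmL : m ≤ L) (hh : 0 ≤ h)
    (hhL : h * L ≤ 1) (x y : E) :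
    ∫ s, ‖x - y - h • (b x - b y) + (h / 2) • (b (lmcStep b (h / 2) (y, s)) - b y)‖ ^ 2 ∂𝒩 E ≤
      (1 - m * h) * ‖x - y‖ ^ 2 +
        h ^ 3 * (L ^ 2 + G) ^ 2 / (4 * m) * (1 + ‖y‖ ^ 2 + 2 * finrank ℝ E / m) := by
  have hG : 0 ≤ G := by simpa using (norm_nonneg _).trans (hΔ 0)
  have hmh : m * h ≤ 1 := by nlinarith
  let Z (s : E) := (h / 2) • (b (lmcStep b (h / 2) (y, s)) - b y)
  have hdrift := memLp_drift_lmcStep_half (h := h) hb y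
  have hZ : MemLp Z 2 (𝒩 E) := (hdrift.sub (memLp_const (b y))).const_smul (h / 2)
  have hZ_mean : ‖∫ s, Z s ∂𝒩 E‖ ≤
      h / 2 * (h / 2 * ((L ^ 2 + G) * (1 + ‖y‖ + √(h * finrank ℝ E)))) := by
    rw [integral_smul, norm_smul, Real.norm_of_nonneg (by positivity),
      integral_sub (hdrift.integrable one_le_two) (integrable_const _), integral_const,
      probReal_univ, one_smul]
    gcongr
    exact norm_integral_drift_sub_le hb hb2 hΔ hm.le (hm.le.trans hmL) hh hhL y
  have hZ_var : ∫ s, ‖Z s - (h / 2) • (b (y - (h / 2) • b y) - b y)‖ ^ 2 ∂𝒩 E ≤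
      (h / 2) ^ 2 * (L ^ 2 * (h * finrank ℝ E)) := by
    simp_rw [Z, ← smul_sub, sub_sub_sub_cancel_right, norm_smul, mul_pow, lmcStep_half,
      integral_const_mul, Real.norm_eq_abs, sq_abs]
    gcongr
    exact integral_norm_drift_sub_sq_le hb hh _
  have hmean_sq : ‖x - y - h • (b x - b y) + ∫ s, Z s ∂𝒩 E‖ ^ 2 ≤ (1 - m * h) * ‖x - y‖ ^ 2 +
      h / (4 * m) * (h / 2 * ((L ^ 2 + G) * (1 + ‖y‖ + √(h * finrank ℝ E)))) ^ 2 := by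
    refine le_trans ?_ (sq_one_sub_mul_add_le hm hh hmh)
    gcongr
    exact (norm_add_le _ _).trans (add_le_add (hb.norm_euler_sub_le h hh hhL x y) hZ_mean)
  linarith [integral_norm_add_sq_le hZ (x - y - h • (b x - b y))
    ((h / 2) • (b (y - (h / 2) • b y) - b y)), doubling_error_le (K := L ^ 2 + G) (r := ‖y‖) hm hmL
    hh hmh (Nat.cast_nonneg (finrank ℝ E)) (by linarith)]

lemma lintegral_enorm_lmcStep_sub_sq_le (hb : IsContractiveDrift m L b) (hb2 : ContDiff ℝ 2 b)
    (hΔ : ∀ x, ‖Δ b x‖ ≤ G * (1 + ‖x‖)) (hm : 0 < m) (hmL : m ≤ L) (hh : 0 ≤ h)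
    (hhL : h * L ≤ 1) (x y : E) :
    ∫⁻ s, ‖x - y - h • (b x - b y) + (h / 2) • (b (lmcStep b (h / 2) (y, s)) - b y)‖ₑ ^ 2 ∂𝒩 E ≤
      ENNReal.ofReal (1 - m * h) * ‖x - y‖ₑ ^ 2 +
        ENNReal.ofReal (h ^ 3 * (L ^ 2 + G) ^ 2 / (4 * m)) *
          (1 + ‖y‖ₑ ^ 2 + ENNReal.ofReal (2 * finrank ℝ E / m)) := by
  have hmh : 0 ≤ 1 - m * h := by nlinarith
  have hmem : MemLp (fun s => x - y - h • (b x - b y) +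
      (h / 2) • (b (lmcStep b (h / 2) (y, s)) - b y)) 2 (𝒩 E) :=
    (memLp_const (x - y - h • (b x - b y))).add
      (((memLp_drift_lmcStep_half hb y).sub (memLp_const (b y))).const_smul (h / 2))
  rw [lintegral_enorm_sq_eq_ofReal hmem, ← ofReal_norm, ← ofReal_norm,
    ← ENNReal.ofReal_pow (norm_nonneg _), ← ENNReal.ofReal_pow (norm_nonneg _),
    ← ENNReal.ofReal_one, ← ENNReal.ofReal_add (by positivity) (by positivity),
    ← ENNReal.ofReal_add (by positivity) (by positivity), ← ENNReal.ofReal_mul hmh,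
    ← ENNReal.ofReal_mul (by positivity), ← ENNReal.ofReal_add (by positivity) (by positivity)]
  exact ENNReal.ofReal_le_ofReal (integral_norm_lmcStep_sub_sq_le hb hb2 hΔ hm hmL hh hhL x y)

lemma eW2_sq_lmcLaw_lmcLaw_half_le [IsProbabilityMeasure μ] [IsProbabilityMeasure ν]
    (hb : IsContractiveDrift m L b) (hb2 : ContDiff ℝ 2 b)
    (hΔ : ∀ x, ‖Δ b x‖ ≤ G * (1 + ‖x‖)) (hm : 0 < m) (hmL : m ≤ L) (hh : 0 ≤ h)
    (hhL : h * L ≤ 1) :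
    eW2 (lmcLaw b h μ) ((lmcLaw b (h / 2))^[2] ν) ^ 2 ≤
      ENNReal.ofReal (1 - m * h) * eW2 μ ν ^ 2 +
        ENNReal.ofReal (h ^ 3 * (L ^ 2 + G) ^ 2 / (4 * m)) *
          (1 + ∫⁻ x, ‖x‖ₑ ^ 2 ∂ν + ENNReal.ofReal (2 * finrank ℝ E / m)) := by
  have hb_meas := hb.continuous.measurable
  have hT := measurable_lmcStep hb_meas (h / 2)
  have hdiff (x y : E) (s : E × E) : x - h • b x + √h • (s.1 + s.2)
      - lmcStep b (h / 2) (lmcStep b (h / 2) (y, s.1), s.2)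
      = x - y - h • (b x - b y) + (h / 2) • (b (lmcStep b (h / 2) (y, s.1)) - b y) := by
    rw [lmcStep_half b h _ s.2]
    nth_rw 1 [lmcStep_half]
    module
  rw [Function.iterate_succ_apply', Function.iterate_one, lmcLaw_lmcLaw_eq_map_prod_prod hb_meas,
    lmcLaw_eq_map_prod_prod hb_meas]
  refine (eW2_sq_map_prod_le (by fun_prop) (by fun_prop)
    (c := ENNReal.ofReal (1 - m * h)) ENNReal.ofReal_ne_top
    (g := fun y => ENNReal.ofReal (h ^ 3 * (L ^ 2 + G) ^ 2 / (4 * m)) *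
      (1 + ‖y‖ₑ ^ 2 + ENNReal.ofReal (2 * finrank ℝ E / m))) (by fun_prop)
    fun x y => ?_).trans_eq ?_
  · simp_rw [hdiff]
    rw [lintegral_prod _ (by fun_prop)]
    simpa using lintegral_enorm_lmcStep_sub_sq_le hb hb2 hΔ hm hmL hh hhL x y
  · rw [lintegral_const_mul _ (by fun_prop), lintegral_add_right _ (by fun_prop),
      lintegral_add_left (by fun_prop)]
    simp

end StepDoubling

section Telescoping

open Laplacian Filter Topology

variable {E : Type*} [NormedAddCommGroup E] [InnerProductSpace ℝ E] [FiniteDimensional ℝ E]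
  [MeasurableSpace E] [BorelSpace E] {m L G Q h : ℝ} {b : E → E} {μ ν : Measure E}
  [IsProbabilityMeasure ν]

lemma one_add_lintegral_enorm_sq_iterate_lmcLaw_le (hb : IsContractiveDrift m L b) (hm : 0 < m)
    (hh : 0 ≤ h) (hhL : h * L ≤ 1) (hmh : m * h ≤ 1)
    (hν : 1 + ∫⁻ x, ‖x‖ₑ ^ 2 ∂ν + ENNReal.ofReal (2 * finrank ℝ E / m) ≤ ENNReal.ofReal (Q ^ 2))
    (k : ℕ) :
    1 + ∫⁻ x, ‖x‖ₑ ^ 2 ∂(lmcLaw b h)^[k] ν + ENNReal.ofReal (2 * finrank ℝ E / m) ≤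
      ENNReal.ofReal (2 * Q ^ 2) := by
  have hdim : ENNReal.ofReal (2 * finrank ℝ E / m) ≤ ENNReal.ofReal (Q ^ 2) :=
    le_add_self.trans hν
  calc 1 + ∫⁻ x, ‖x‖ₑ ^ 2 ∂(lmcLaw b h)^[k] ν + ENNReal.ofReal (2 * finrank ℝ E / m)
      ≤ 1 + (∫⁻ x, ‖x‖ₑ ^ 2 ∂ν + ENNReal.ofReal (2 * finrank ℝ E / m)) +
          ENNReal.ofReal (Q ^ 2) := by
        gcongr
        exact lintegral_enorm_sq_iterate_lmcLaw_le hb hm hh hhL hmh k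
    _ ≤ ENNReal.ofReal (Q ^ 2) + ENNReal.ofReal (Q ^ 2) := by rw [← add_assoc]; gcongr
    _ = ENNReal.ofReal (2 * Q ^ 2) := by
        rw [← ENNReal.ofReal_add (by positivity) (by positivity), two_mul]

lemma eW2_iterate_lmcLaw_half_le (hb : IsContractiveDrift m L b) (hb2 : ContDiff ℝ 2 b)
    (hΔ : ∀ x, ‖Δ b x‖ ≤ G * (1 + ‖x‖)) (hm : 0 < m) (hmL : m ≤ L) (hh : 0 ≤ h)
    (hhL : h * L ≤ 1) (hQ : 0 ≤ Q)
    (hν : 1 + ∫⁻ x, ‖x‖ₑ ^ 2 ∂ν + ENNReal.ofReal (2 * finrank ℝ E / m) ≤ ENNReal.ofReal (Q ^ 2))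
    (k : ℕ) :
    eW2 ((lmcLaw b h)^[k] ν) ((lmcLaw b (h / 2))^[2 * k] ν) ≤
      ENNReal.ofReal ((L ^ 2 + G) / m * Q * h) := by
  have hG : 0 ≤ G := by simpa using (norm_nonneg _).trans (hΔ 0)
  have hmh : m * h ≤ 1 := by nlinarith
  have hmh0 : 0 ≤ m * h := by positivity
  have hrs : ENNReal.ofReal (1 - m * h) + ENNReal.ofReal (m * h) ≤ 1 := by
    rw [← ENNReal.ofReal_add (by linarith) hmh0]; simp
  have hprob (h : ℝ) (k : ℕ) :=
    isProbabilityMeasure_iterate_lmcLaw (ν := ν) (h := h) hb.continuous.measurable k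
  have hstep (k : ℕ) : eW2 ((lmcLaw b h)^[k + 1] ν) ((lmcLaw b (h / 2))^[2 * (k + 1)] ν) ^ 2 ≤
      ENNReal.ofReal (1 - m * h) * eW2 ((lmcLaw b h)^[k] ν) ((lmcLaw b (h / 2))^[2 * k] ν) ^ 2 +
        ENNReal.ofReal (m * h) * ENNReal.ofReal (((L ^ 2 + G) / m * Q * h) ^ 2) := by
    have := hprob h k
    have := hprob (h / 2) (2 * k)
    rw [Nat.mul_succ, add_comm (2 * k), Function.iterate_succ_apply', Function.iterate_add_apply]
    refine (eW2_sq_lmcLaw_lmcLaw_half_le hb hb2 hΔ hm hmL hh hhL).trans (add_le_add le_rfl ?_)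
    have hmoment := one_add_lintegral_enorm_sq_iterate_lmcLaw_le (h := h / 2) hb hm (by positivity)
      (by linarith) (by linarith) hν (2 * k)
    refine (mul_le_mul_right hmoment _).trans ?_
    rw [← ENNReal.ofReal_mul (by positivity), ← ENNReal.ofReal_mul hmh0]
    refine ENNReal.ofReal_le_ofReal ?_
    have : 0 ≤ h ^ 3 * (L ^ 2 + G) ^ 2 * Q ^ 2 / m := by positivity
    calc _ = h ^ 3 * (L ^ 2 + G) ^ 2 * Q ^ 2 / m / 2 := by ring
      _ ≤ h ^ 3 * (L ^ 2 + G) ^ 2 * Q ^ 2 / m := by linarith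
      _ = m * h * ((L ^ 2 + G) / m * Q * h) ^ 2 := by field_simp
  rw [← ENNReal.pow_le_pow_left_iff two_ne_zero, ← ENNReal.ofReal_pow (by positivity)]
  simpa [eW2_self] using le_max_of_succ_le hrs hstep k

lemma eW2_iterate_lmcLaw_dyadic_le (hb : IsContractiveDrift m L b) (hb2 : ContDiff ℝ 2 b)
    (hΔ : ∀ x, ‖Δ b x‖ ≤ G * (1 + ‖x‖)) (hm : 0 < m) (hmL : m ≤ L) (hh : 0 ≤ h)
    (hhL : h * L ≤ 1) (hQ : 0 ≤ Q)
    (hν : 1 + ∫⁻ x, ‖x‖ₑ ^ 2 ∂ν + ENNReal.ofReal (2 * finrank ℝ E / m) ≤ ENNReal.ofReal (Q ^ 2))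
    (k N : ℕ) :
    eW2 ((lmcLaw b h)^[k] ν) ((lmcLaw b (h / 2 ^ N))^[2 ^ N * k] ν) ≤
      ENNReal.ofReal ((L ^ 2 + G) / m * Q * h * (2 - 2 / 2 ^ N)) := by
  have hG : 0 ≤ G := by simpa using (norm_nonneg _).trans (hΔ 0)
  have : 0 ≤ (L ^ 2 + G) / m * Q * h := by positivity
  induction N with
  | zero => simp [eW2_self]
  | succ N ih =>
    have hprob (h : ℝ) (k : ℕ) :=
      isProbabilityMeasure_iterate_lmcLaw (ν := ν) (h := h) hb.continuous.measurable k
    have := hprob h k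
    have := hprob (h / 2 ^ N) (2 ^ N * k)
    have hN : (1 : ℝ) ≤ 2 ^ N := one_le_pow₀ one_le_two
    have hhalf := eW2_iterate_lmcLaw_half_le hb hb2 hΔ hm hmL (h := h / 2 ^ N) (by positivity)
      ((div_mul_eq_mul_div _ _ _).trans_le (div_le_one_of_le₀ (hhL.trans hN) (by positivity)))
      hQ hν (2 ^ N * k)
    rw [div_div, ← pow_succ, ← mul_assoc, ← pow_succ'] at hhalf
    refine (eW2_triangle _ _ _).trans ((add_le_add ih hhalf).trans_eq ?_)
    have hgap : 0 ≤ 2 - 2 / (2 : ℝ) ^ N := sub_nonneg.2 (div_le_self zero_le_two hN)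
    rw [← ENNReal.ofReal_add (by positivity) (by positivity)]
    congr 1
    field_simp
    ring

lemma eW2_iterate_lmcLaw_le_add [IsProbabilityMeasure μ] (hb : IsContractiveDrift m L b)
    (hm : 0 ≤ m) (hh : 0 ≤ h) (hhL : h * L ≤ 1) (k : ℕ) :
    eW2 ((lmcLaw b h)^[k] ν) μ ≤
      ENNReal.ofReal (1 - m * h) ^ k * eW2 ν μ + k * eW2 (lmcLaw b h μ) μ := by
  have hprob (k : ℕ) :=
    isProbabilityMeasure_iterate_lmcLaw (ν := ν) (h := h) hb.continuous.measurable k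
  have := isProbabilityMeasure_lmcLaw (ν := μ) (h := h) hb.continuous.measurable
  have hr : ENNReal.ofReal (1 - m * h) ≤ 1 :=
    ENNReal.ofReal_le_one.2 (sub_le_self _ (by positivity))
  induction k with
  | zero => simp
  | succ k ih =>
    have := hprob k
    have := hprob (k + 1)
    calc eW2 ((lmcLaw b h)^[k + 1] ν) μ
        ≤ eW2 ((lmcLaw b h)^[k + 1] ν) (lmcLaw b h μ) + eW2 (lmcLaw b h μ) μ := eW2_triangle _ _ _
      _ ≤ ENNReal.ofReal (1 - m * h) *
            (ENNReal.ofReal (1 - m * h) ^ k * eW2 ν μ + k * eW2 (lmcLaw b h μ) μ) +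
          eW2 (lmcLaw b h μ) μ := by
          rw [Function.iterate_succ_apply']
          gcongr
          exact (eW2_lmcLaw_le hb hh hhL).trans (by gcongr)
      _ ≤ ENNReal.ofReal (1 - m * h) ^ (k + 1) * eW2 ν μ + (k + 1 : ℕ) * eW2 (lmcLaw b h μ) μ := by
          rw [mul_add, ← mul_assoc, ← pow_succ', Nat.cast_succ, add_mul, one_mul, ← add_assoc]
          gcongr ?_ + ?_ + _
          · exact le_rfl
          · exact mul_le_of_le_one_left' hr

lemma tendsto_natCast_mul_dyadic_nhds_zero {F : ℝ → ℝ≥0∞} (hh : 0 < h)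
    (hF : Tendsto (fun δ => F δ / ENNReal.ofReal δ) (𝓝[>] 0) (𝓝 0)) (k : ℕ) :
    Tendsto (fun N : ℕ => (2 ^ N * k : ℕ) * F (h / 2 ^ N)) atTop (𝓝 0) := by
  have hδ : Tendsto (fun N : ℕ => h / 2 ^ N) atTop (𝓝[>] 0) := by
    refine tendsto_nhdsWithin_iff.2 ⟨?_, .of_forall fun N => Set.mem_Ioi.2 (by positivity)⟩
    exact tendsto_const_nhds.div_atTop (tendsto_pow_atTop_atTop_of_one_lt one_lt_two)
  have hlim := ENNReal.Tendsto.const_mul (a := ENNReal.ofReal (k * h)) (hF.comp hδ)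
    (.inr (by finiteness))
  rw [mul_zero] at hlim
  refine hlim.congr fun N => ?_
  have hδN : ENNReal.ofReal (h / 2 ^ N) ≠ 0 := by simpa using by positivity
  have hkh : k * h = (2 ^ N * k : ℕ) * (h / 2 ^ N) := by push_cast; field_simp
  rw [hkh, ENNReal.ofReal_mul (by positivity), ENNReal.ofReal_natCast, Function.comp_apply,
    mul_assoc, ENNReal.mul_div_cancel hδN (by finiteness)]

theorem eW2_iterate_lmcLaw_le [IsProbabilityMeasure μ] (hb : IsContractiveDrift m L b)
    (hb2 : ContDiff ℝ 2 b) (hΔ : ∀ x, ‖Δ b x‖ ≤ G * (1 + ‖x‖)) (hm : 0 < m) (hmL : m ≤ L)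
    (hh : 0 < h) (hhL : h * L ≤ 1) (hQ : 0 ≤ Q)
    (hν : 1 + ∫⁻ x, ‖x‖ₑ ^ 2 ∂ν + ENNReal.ofReal (2 * finrank ℝ E / m) ≤ ENNReal.ofReal (Q ^ 2))
    (hμ : Tendsto (fun δ => eW2 (lmcLaw b δ μ) μ / ENNReal.ofReal δ) (𝓝[>] 0) (𝓝 0)) (k : ℕ) :
    eW2 ((lmcLaw b h)^[k] ν) μ ≤ ENNReal.ofReal (exp (-(m * k * h))) * eW2 ν μ +
      ENNReal.ofReal (2 * ((L ^ 2 + G) / m * Q) * h) := by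
  have hG : 0 ≤ G := by simpa using (norm_nonneg _).trans (hΔ 0)
  have hlim := (tendsto_natCast_mul_dyadic_nhds_zero hh hμ k).const_add
    (ENNReal.ofReal (exp (-(m * k * h))) * eW2 ν μ +
      ENNReal.ofReal (2 * ((L ^ 2 + G) / m * Q) * h))
  rw [add_zero] at hlim
  refine ge_of_tendsto' hlim fun N => ?_
  have hprob (h : ℝ) (k : ℕ) :=
    isProbabilityMeasure_iterate_lmcLaw (ν := ν) (h := h) hb.continuous.measurable k
  have := hprob h k
  have := hprob (h / 2 ^ N) (2 ^ N * k)
  have hNL : h / 2 ^ N * L ≤ 1 :=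
    (mul_le_mul_of_nonneg_right (div_le_self hh.le (one_le_pow₀ one_le_two))
      (hm.le.trans hmL)).trans hhL
  have hexp : ENNReal.ofReal (1 - m * (h / 2 ^ N)) ^ (2 ^ N * k) ≤
      ENNReal.ofReal (exp (-(m * k * h))) := by
    have hmkh : -(m * k * h) = (2 ^ N * k : ℕ) * -(m * (h / 2 ^ N)) := by push_cast; field_simp
    rw [hmkh, exp_nat_mul, ENNReal.ofReal_pow (by positivity)]
    gcongr
    exact one_sub_le_exp_neg _
  calc eW2 ((lmcLaw b h)^[k] ν) μ
      ≤ eW2 ((lmcLaw b h)^[k] ν) ((lmcLaw b (h / 2 ^ N))^[2 ^ N * k] ν) +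
          eW2 ((lmcLaw b (h / 2 ^ N))^[2 ^ N * k] ν) μ := eW2_triangle _ _ _
    _ ≤ ENNReal.ofReal (2 * ((L ^ 2 + G) / m * Q) * h) +
          (ENNReal.ofReal (exp (-(m * k * h))) * eW2 ν μ +
            (2 ^ N * k : ℕ) * eW2 (lmcLaw b (h / 2 ^ N) μ) μ) := by
        gcongr
        · refine (eW2_iterate_lmcLaw_dyadic_le hb hb2 hΔ hm hmL hh.le hhL hQ hν k N).trans
            (ENNReal.ofReal_le_ofReal ?_)
          have : 0 ≤ (L ^ 2 + G) / m * Q * h * (2 / 2 ^ N) := by positivity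
          linarith
        · exact (eW2_iterate_lmcLaw_le_add hb hm.le (by positivity) hNL _).trans (by gcongr)
    _ = _ := by rw [← add_assoc, add_comm (ENNReal.ofReal _) (_ * _)]

end Telescoping

section MetropolisCoupling

variable {S α : Type*} [MeasurableSpace S] [MeasurableSpace α] [NormedAddCommGroup α]
  [BorelSpace α] [SecondCountableTopology α] {σ : Measure S} {Ψ : S → S} {pos : S → α}

lemma map_withDensity_eq_of_comp_eq (hΨ : MeasurePreserving Ψ σ σ) {g : S → ℝ≥0∞}
    (hg : Measurable g) (hgΨ : ∀ s, g (Ψ s) = g s) :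
    (σ.withDensity g).map Ψ = σ.withDensity g := by
  ext s hs
  rw [Measure.map_apply hΨ.measurable hs, withDensity_apply _ (hΨ.measurable hs),
    withDensity_apply _ hs, ← hΨ.setLIntegral_comp_preimage hs hg]
  simp_rw [hgΨ]

-- The coupling moves along `Ψ` with the Metropolis probability `min 1 (g ∘ Ψ / g)` and otherwise
-- stays; the measure `min g (g ∘ Ψ)` of the accepted moves is `Ψ`-invariant.
lemma eW2_sq_map_involutive_le (hΨ : MeasurePreserving Ψ σ σ) (hinv : Function.Involutive Ψ)
    {g : S → ℝ≥0∞} (hg : Measurable g) (hpos : Measurable pos) :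
    eW2 ((σ.withDensity g).map (pos ∘ Ψ)) ((σ.withDensity g).map pos) ^ 2 ≤
      ∫⁻ s, (g s - g (Ψ s)) * ‖pos (Ψ s) - pos s‖ₑ ^ 2 ∂σ := by
  have hΨm := hΨ.measurable
  have hgΨ : Measurable fun s => g (Ψ s) := hg.comp hΨm
  have : Measurable fun s => pos (Ψ s) := hpos.comp hΨm
  set accepted := σ.withDensity fun s => min (g s) (g (Ψ s))
  set rejected := σ.withDensity fun s => g s - g (Ψ s)
  have haccepted : accepted.map Ψ = accepted :=
    map_withDensity_eq_of_comp_eq hΨ (hg.min hgΨ) fun s => by rw [hinv s, min_comm]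
  have hsum : accepted + rejected = σ.withDensity g := by
    refine (withDensity_add_left (hg.min hgΨ) _).symm.trans (congrArg _ (funext fun s => ?_))
    exact (add_comm _ _).trans tsub_add_min
  have hγ : IsCoupling
      (accepted.map (fun s => (pos (Ψ s), pos (Ψ s))) + rejected.map fun s => (pos (Ψ s), pos s))
      ((σ.withDensity g).map (pos ∘ Ψ)) ((σ.withDensity g).map pos) := by
    constructor
    · rw [Measure.map_add _ _ measurable_fst, Measure.map_map (by fun_prop) (by fun_prop),
        Measure.map_map (by fun_prop) (by fun_prop), ← hsum, Measure.map_add _ _ (hpos.comp hΨm)]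
      rfl
    · rw [Measure.map_add _ _ measurable_snd, Measure.map_map (by fun_prop) (by fun_prop),
        Measure.map_map (by fun_prop) (by fun_prop), ← hsum, Measure.map_add _ _ hpos]
      conv_rhs => rw [← haccepted, Measure.map_map hpos hΨm]
      rfl
  refine hγ.eW2_sq_le.trans_eq ?_
  rw [lintegral_add_measure, lintegral_map (by fun_prop) (by fun_prop),
    lintegral_map (by fun_prop) (by fun_prop)]
  simp only [sub_self, enorm_zero, zero_pow two_ne_zero, lintegral_zero, zero_add]
  exact lintegral_withDensity_eq_lintegral_mul σ (hg.sub hgΨ) (by fun_prop)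

lemma eW2_sq_map_involutive_le_energy (hΨ : MeasurePreserving Ψ σ σ)
    (hinv : Function.Involutive Ψ) {H : S → ℝ} (hH : Measurable H) (hpos : Measurable pos)
    {ρ : Measure S} (hρ : ρ = σ.withDensity fun s => ENNReal.ofReal (exp (-H s))) :
    eW2 (ρ.map (pos ∘ Ψ)) (ρ.map pos) ^ 2 ≤
      ∫⁻ s, ENNReal.ofReal (H (Ψ s) - H s) * ‖pos (Ψ s) - pos s‖ₑ ^ 2 ∂ρ := by
  have hg : Measurable fun s => ENNReal.ofReal (exp (-H s)) := by fun_prop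
  have hΨm := hΨ.measurable
  have : Measurable fun s => H (Ψ s) := hH.comp hΨm
  have : Measurable fun s => ‖pos (Ψ s) - pos s‖ₑ ^ 2 :=
    ((hpos.comp hΨm).sub hpos).enorm.pow_const 2
  rw [hρ, lintegral_withDensity_eq_lintegral_mul _ hg (by fun_prop)]
  refine (eW2_sq_map_involutive_le hΨ hinv hg hpos).trans (lintegral_mono fun s => ?_)
  rw [Pi.mul_apply, ← mul_assoc, ← ENNReal.ofReal_sub _ (exp_pos _).le,
    ← ENNReal.ofReal_mul (exp_pos _).le]
  gcongr
  have hexp : exp (-H (Ψ s)) = exp (-H s) * exp (-(H (Ψ s) - H s)) := by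
    rw [← exp_add]; ring_nf
  rw [hexp, ← mul_one_sub]
  exact mul_le_mul_of_nonneg_left (by linarith [one_sub_le_exp_neg (H (Ψ s) - H s)])
    (exp_pos _).le

end MetropolisCoupling

section Leapfrog

variable {E : Type*} [NormedAddCommGroup E] [InnerProductSpace ℝ E] {b : E → E} {f : E → ℝ}

/-- One leapfrog step of size `ε` of the Hamiltonian dynamics with force `-b`, followed by a flip
of the momentum, which makes it an involution. Its position component is an LMC step of size
`ε ^ 2 / 2`. -/
def leapfrog (b : E → E) (ε : ℝ) (p : E × E) : E × E :=
  let u := p.2 - (ε / 2) • b p.1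
  let y := p.1 + ε • u
  (y, (ε / 2) • b y - u)

/-- The total energy at position `p.1` and momentum `p.2` in the potential `f`. -/
def hamiltonian (f : E → ℝ) (p : E × E) : ℝ := f p.1 + ‖p.2‖ ^ 2 / 2

lemma involutive_leapfrog (b : E → E) (ε : ℝ) : Function.Involutive (leapfrog b ε) := fun p => by
  have hreturn (x u : E) :
      x + ε • u + ε • ((ε / 2) • b (x + ε • u) - u - (ε / 2) • b (x + ε • u)) = x := by module
  ext1
  · exact hreturn _ _
  · simp only [leapfrog, hreturn]
    abel

lemma continuous_leapfrog (hb : Continuous b) (ε : ℝ) : Continuous (leapfrog b ε) := by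
  unfold leapfrog; fun_prop

lemma leapfrog_fst {h : ℝ} (hh : 0 ≤ h) (p : E × E) :
    (leapfrog b √(2 * h) p).1 = lmcStep b h p := by
  have : √(2 * h) * (√(2 * h) / 2) = h := by
    rw [mul_div_assoc', mul_self_sqrt (by positivity), mul_div_cancel_left₀ h two_ne_zero]
  simp only [leapfrog, lmcStep, smul_sub, smul_smul, this]
  abel

variable [FiniteDimensional ℝ E] [MeasurableSpace E] [BorelSpace E]

lemma measurePreserving_leapfrog (hb : Measurable b) (ε : ℝ) :
    MeasurePreserving (leapfrog b ε) ((volume : Measure E).prod volume) (volume.prod volume) := by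
  have hkick : MeasurePreserving (fun p : E × E => (p.1, p.2 - (ε / 2) • b p.1))
      (volume.prod volume) (volume.prod volume) :=
    (MeasurePreserving.id volume).skew_product (g := fun x v => v - (ε / 2) • b x) (by fun_prop)
      (ae_of_all _ fun x => (measurePreserving_sub_right volume _).map_eq)
  have hmove : MeasurePreserving (fun p : E × E => (p.1, p.2 + ε • p.1))
      (volume.prod volume) (volume.prod volume) :=
    (MeasurePreserving.id volume).skew_product (g := fun u x => x + ε • u) (by fun_prop)
      (ae_of_all _ fun u => (measurePreserving_add_right volume _).map_eq)
  have hreflect : MeasurePreserving (fun p : E × E => (p.1, (ε / 2) • b p.1 - p.2))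
      (volume.prod volume) (volume.prod volume) :=
    (MeasurePreserving.id volume).skew_product (g := fun y u => (ε / 2) • b y - u) (by fun_prop)
      (ae_of_all _ fun y => (Measure.measurePreserving_sub_left volume _).map_eq)
  exact hreflect.comp <| Measure.measurePreserving_swap.comp <| hmove.comp <|
    Measure.measurePreserving_swap.comp hkick

lemma prod_stdGaussian_eq_withDensity_hamiltonian (hf : Measurable f) {c : ℝ≥0∞}
    {μ : Measure E} (hμ : μ = c • volume.withDensity fun x => ENNReal.ofReal (exp (-f x))) :
    ∃ κ : ℝ≥0∞, μ.prod (𝒩 E) = (κ • (volume : Measure E).prod volume).withDensity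
      fun p => ENNReal.ofReal (exp (-hamiltonian f p)) := by
  refine ⟨c * ENNReal.ofReal ((2 * π) ^ (-(finrank ℝ E / 2 : ℝ))), ?_⟩
  have hdensity (p : E × E) :
      ENNReal.ofReal (exp (-f p.1)) * ENNReal.ofReal (gaussianDensity p.2) =
        ENNReal.ofReal ((2 * π) ^ (-(finrank ℝ E / 2 : ℝ))) *
          ENNReal.ofReal (exp (-hamiltonian f p)) := by
    rw [← ENNReal.ofReal_mul (exp_pos _).le, ← ENNReal.ofReal_mul (by positivity), gaussianDensity,
      hamiltonian, mul_left_comm, ← exp_add]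
    ring_nf
  have hH : Measurable (hamiltonian f) := by unfold hamiltonian; fun_prop
  rw [hμ, stdGaussian_eq_withDensity, Measure.prod_smul_left, prod_withDensity (by fun_prop)
    continuous_gaussianDensity.measurable.ennreal_ofReal, withDensity_smul_measure, mul_smul]
  simp_rw [hdensity]
  exact congrArg _ (withDensity_smul _ (by fun_prop))

lemma eW2_sq_lmcLaw_self_le (hf : Continuous f) (hb : Continuous b) {c : ℝ≥0∞}
    {μ : Measure E} [SFinite μ]
    (hμ : μ = c • volume.withDensity fun x => ENNReal.ofReal (exp (-f x))) {h : ℝ} (hh : 0 ≤ h) :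
    eW2 (lmcLaw b h μ) μ ^ 2 ≤ ∫⁻ p, ENNReal.ofReal
      (hamiltonian f (leapfrog b √(2 * h) p) - hamiltonian f p) *
        ‖(leapfrog b √(2 * h) p).1 - p.1‖ₑ ^ 2 ∂μ.prod (𝒩 E) := by
  obtain ⟨κ, hκ⟩ := prod_stdGaussian_eq_withDensity_hamiltonian hf.measurable hμ
  have hH : Continuous (hamiltonian f) := by unfold hamiltonian; fun_prop
  have hcoupling := eW2_sq_map_involutive_le_energy
    ((measurePreserving_leapfrog hb.measurable √(2 * h)).smul_measure κ)
    (involutive_leapfrog b √(2 * h)) hH.measurable measurable_fst hκ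
  have hfst : Prod.fst ∘ leapfrog b √(2 * h) = lmcStep b h := funext (leapfrog_fst hh)
  have hmarg : (μ.prod (𝒩 E)).map Prod.fst = μ := Measure.fst_prod
  rwa [hfst, hmarg] at hcoupling

end Leapfrog

section EnergyError

open Asymptotics Filter Topology

variable {E : Type*} [NormedAddCommGroup E] [InnerProductSpace ℝ E]

lemma norm_leapfrog_fst_sub_le {b : E → E} {ε : ℝ} (hε : 0 ≤ ε) (hε2 : ε ≤ 2) (p : E × E) :
    ‖(leapfrog b ε p).1 - p.1‖ ≤ ε * (‖p.2‖ + ‖b p.1‖) := by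
  rw [leapfrog, add_sub_cancel_left, norm_smul, norm_of_nonneg hε]
  gcongr
  refine (norm_sub_le _ _).trans (add_le_add le_rfl ?_)
  rw [norm_smul, norm_of_nonneg (by positivity)]
  exact mul_le_of_le_one_left (norm_nonneg _) (by linarith)

lemma leapfrog_fst_sub_isBigO (b : E → E) (p : E × E) :
    (fun ε => (leapfrog b ε p).1 - p.1) =O[𝓝 0] fun ε => ε := by
  simp_rw [leapfrog, add_sub_cancel_left]
  have hbounded : (fun ε : ℝ => p.2 - (ε / 2) • b p.1) =O[𝓝 0] fun _ => (1 : ℝ) :=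
    (by fun_prop : Continuous fun ε : ℝ => p.2 - (ε / 2) • b p.1).continuousAt.isBigO_one ℝ
  simpa using (isBigO_refl (fun ε : ℝ => ε) (𝓝 0)).smul hbounded

variable [CompleteSpace E] {f : E → ℝ} {L : ℝ}

/-- The error of the trapezoidal rule for `∇f` along the segment from `x` to `y`. -/
def trapezoidError (f : E → ℝ) (x y : E) : ℝ :=
  f y - f x - 1 / 2 * inner ℝ (y - x) (gradient f x + gradient f y)

lemma hasDerivAt_comp_add_smul (hf : Differentiable ℝ f) (x v : E) (t : ℝ) :
    HasDerivAt (fun t : ℝ => f (x + t • v)) (inner ℝ (gradient f (x + t • v)) v) t := by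
  have hline : HasDerivAt (fun t : ℝ => x + t • v) v t := by
    simpa using ((hasDerivAt_id t).smul_const v).const_add x
  rw [inner_gradient_left]
  exact (hf (x + t • v)).hasFDerivAt.comp_hasDerivAt t hline

lemma abs_trapezoidError_le_of_norm_gradient_sub_le (hf : Differentiable ℝ f) {x v u : E} {c : ℝ}
    (h : ∀ t ∈ Set.Icc (0 : ℝ) 1, ‖gradient f (x + t • v) - gradient f x - t • u‖ ≤ c) :
    |trapezoidError f x (x + v)| ≤ 3 / 2 * (c * ‖v‖) := by
  have hinner (t : ℝ) (ht : t ∈ Set.Icc (0 : ℝ) 1) :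
      ‖(inner ℝ (gradient f (x + t • v) - gradient f x - t • u) v : ℝ)‖ ≤ c * ‖v‖ :=
    (norm_inner_le_norm _ _).trans (by gcongr; exact h t ht)
  have hderiv (t : ℝ) : HasDerivAt
      (fun t : ℝ => f (x + t • v) - t * inner ℝ (gradient f x) v - t ^ 2 * (inner ℝ u v / 2))
      (inner ℝ (gradient f (x + t • v) - gradient f x - t • u) v) t := by
    have hlin := (hasDerivAt_id t).mul_const (inner ℝ (gradient f x) v)
    have hquad := (hasDerivAt_pow 2 t).mul_const (inner ℝ u v / 2)
    convert! ((hasDerivAt_comp_add_smul hf x v t).sub hlin).sub hquad using 1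
    rw [inner_sub_left, inner_sub_left, real_inner_smul_left]
    push_cast
    ring
  have htaylor := (convex_Icc (0 : ℝ) 1).norm_image_sub_le_of_norm_hasDerivWithin_le
    (fun t _ => (hderiv t).hasDerivWithinAt) hinner (Set.left_mem_Icc.2 zero_le_one)
    (Set.right_mem_Icc.2 zero_le_one)
  have hend := hinner 1 (Set.right_mem_Icc.2 zero_le_one)
  simp only [one_smul, zero_smul, add_zero, Real.norm_eq_abs, inner_sub_left] at htaylor hend
  rw [trapezoidError, add_sub_cancel_left, inner_add_right, real_inner_comm _ v,
    real_inner_comm _ v, abs_le]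
  rw [abs_le] at htaylor hend
  simp only [one_pow, one_mul, zero_mul, ne_eq, OfNat.ofNat_ne_zero, not_false_eq_true, zero_pow,
    sub_zero] at htaylor
  constructor <;> linarith

lemma abs_trapezoidError_le (hf : Differentiable ℝ f)
    (hL : ∀ x y, ‖gradient f x - gradient f y‖ ≤ L * ‖x - y‖) (hL0 : 0 ≤ L) (x y : E) :
    |trapezoidError f x y| ≤ 3 / 2 * L * ‖y - x‖ ^ 2 := by
  have := abs_trapezoidError_le_of_norm_gradient_sub_le hf (x := x) (v := y - x) (u := 0)
    (c := L * ‖y - x‖) fun t ht => by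
      refine (by simpa using hL (x + t • (y - x)) x : _ ≤ _).trans ?_
      rw [norm_smul, norm_of_nonneg ht.1]
      gcongr
      exact mul_le_of_le_one_left (norm_nonneg _) ht.2
  rw [add_sub_cancel] at this
  exact this.trans_eq (by ring)

lemma trapezoidError_isLittleO (hf : Differentiable ℝ f) {x : E}
    (hf2 : DifferentiableAt ℝ (gradient f) x) :
    trapezoidError f x =o[𝓝 x] fun y => ‖y - x‖ ^ 2 := by
  refine isLittleO_iff.2 fun c hc => ?_
  obtain ⟨r, hr, hball⟩ := Metric.eventually_nhds_iff_ball.1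
    (hf2.hasFDerivAt.isLittleO.def (by positivity : 0 < 2 / 3 * c))
  filter_upwards [Metric.ball_mem_nhds x hr] with y hy
  have := abs_trapezoidError_le_of_norm_gradient_sub_le hf (x := x) (v := y - x)
    (u := fderiv ℝ (gradient f) x (y - x)) (c := 2 / 3 * c * ‖y - x‖) fun t ht => by
      have hnorm : ‖t • (y - x)‖ ≤ ‖y - x‖ := by
        rw [norm_smul, norm_of_nonneg ht.1]
        exact mul_le_of_le_one_left (norm_nonneg _) ht.2
      have hmem : x + t • (y - x) ∈ Metric.ball x r := by
        rw [mem_ball_iff_norm, add_sub_cancel_left]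
        exact hnorm.trans_lt (mem_ball_iff_norm.1 hy)
      have := hball _ hmem
      rw [add_sub_cancel_left, map_smul] at this
      exact this.trans (by gcongr)
  rw [add_sub_cancel] at this
  rw [Real.norm_eq_abs, norm_of_nonneg (by positivity)]
  exact this.trans_eq (by ring)

lemma hamiltonian_leapfrog_sub (f : E → ℝ) (ε : ℝ) (p : E × E) :
    hamiltonian f (leapfrog (gradient f) ε p) - hamiltonian f p =
      trapezoidError f p.1 (leapfrog (gradient f) ε p).1 + ε ^ 2 / 8 *
        (‖gradient f (leapfrog (gradient f) ε p).1‖ ^ 2 - ‖gradient f p.1‖ ^ 2) := by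
  obtain ⟨x, v⟩ := p
  obtain ⟨u, rfl⟩ : ∃ u, v = u + (ε / 2) • gradient f x := ⟨v - (ε / 2) • gradient f x, by abel⟩
  simp only [hamiltonian, leapfrog, trapezoidError, add_sub_cancel_right, add_sub_cancel_left]
  rw [norm_sub_sq_real, norm_add_sq_real, norm_smul, norm_smul, real_inner_smul_left,
    real_inner_smul_left, real_inner_smul_right, inner_add_right, real_inner_comm u]
  simp only [mul_pow, Real.norm_eq_abs, sq_abs]
  ring

lemma hamiltonian_leapfrog_sub_isLittleO (hf : Differentiable ℝ f)
    (hf2 : Differentiable ℝ (gradient f)) (p : E × E) :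
    (fun ε => hamiltonian f (leapfrog (gradient f) ε p) - hamiltonian f p) =o[𝓝 0]
      fun ε => ε ^ 2 := by
  have hfst : Continuous fun ε => (leapfrog (gradient f) ε p).1 := by
    change Continuous fun ε : ℝ => p.1 + ε • (p.2 - (ε / 2) • gradient f p.1)
    fun_prop
  have hlim : Tendsto (fun ε => (leapfrog (gradient f) ε p).1) (𝓝 0) (𝓝 p.1) := by
    simpa [leapfrog] using hfst.tendsto 0
  simp_rw [hamiltonian_leapfrog_sub]
  refine .add ?_ ?_
  · exact ((trapezoidError_isLittleO hf (hf2 p.1)).comp_tendsto hlim).trans_isBigO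
      ((leapfrog_fst_sub_isBigO _ p).norm_left.pow 2)
  · have hgrad : Tendsto (fun ε => ‖gradient f (leapfrog (gradient f) ε p).1‖ ^ 2 -
        ‖gradient f p.1‖ ^ 2) (𝓝 0) (𝓝 0) := by
      have := (((hf2.continuous.tendsto p.1).comp hlim).norm.pow 2).sub_const (‖gradient f p.1‖ ^ 2)
      rwa [sub_self] at this
    have hsq : (fun ε : ℝ => ε ^ 2 / 8) =O[𝓝 0] fun ε => ε ^ 2 :=
      (isBigO_const_mul_self (1 / 8) _ _).congr_left fun ε => by ring
    simpa using hsq.mul_isLittleO ((isLittleO_one_iff ℝ).2 hgrad)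

lemma abs_hamiltonian_leapfrog_sub_le (hf : Differentiable ℝ f)
    (hL : ∀ x y, ‖gradient f x - gradient f y‖ ≤ L * ‖x - y‖) (hL0 : 0 ≤ L) {ε : ℝ} (hε : 0 ≤ ε)
    (hε2 : ε ≤ 2) (p : E × E) :
    |hamiltonian f (leapfrog (gradient f) ε p) - hamiltonian f p| ≤
      (2 * L + L ^ 2 / 2) * ε ^ 2 * (‖p.2‖ + ‖gradient f p.1‖) ^ 2 := by
  set a := ‖p.2‖ + ‖gradient f p.1‖
  set y := (leapfrog (gradient f) ε p).1
  have : 0 ≤ a := by positivity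
  have hy : ‖y - p.1‖ ≤ ε * a := norm_leapfrog_fst_sub_le hε hε2 p
  have htrap : |trapezoidError f p.1 y| ≤ 3 / 2 * L * (ε * a) ^ 2 :=
    (abs_trapezoidError_le hf hL hL0 _ _).trans (by gcongr)
  have hdiff : |‖gradient f y‖ - ‖gradient f p.1‖| ≤ L * (ε * a) :=
    (abs_norm_sub_norm_le _ _).trans ((hL _ _).trans (by gcongr))
  have hsum : ‖gradient f y‖ + ‖gradient f p.1‖ ≤ 2 * a + L * (2 * a) := by
    have hεa : L * (ε * a) ≤ L * (2 * a) := by gcongr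
    have hgrad : ‖gradient f p.1‖ ≤ a := le_add_of_nonneg_left (norm_nonneg _)
    linarith [le_abs_self (‖gradient f y‖ - ‖gradient f p.1‖)]
  calc |hamiltonian f (leapfrog (gradient f) ε p) - hamiltonian f p|
      ≤ |trapezoidError f p.1 y| + ε ^ 2 / 8 *
          (|‖gradient f y‖ - ‖gradient f p.1‖| * (‖gradient f y‖ + ‖gradient f p.1‖)) := by
        rw [hamiltonian_leapfrog_sub, sq_sub_sq]
        refine (abs_add_le _ _).trans_eq ?_
        rw [abs_mul, abs_mul, abs_of_nonneg (by positivity : 0 ≤ ε ^ 2 / 8),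
          abs_of_nonneg (by positivity : 0 ≤ ‖gradient f y‖ + ‖gradient f p.1‖),
          mul_comm (‖gradient f y‖ + _)]
    _ ≤ 3 / 2 * L * (ε * a) ^ 2 + ε ^ 2 / 8 * (L * (2 * a) * (2 * a + L * (2 * a))) := by
        gcongr
        exact hdiff.trans (by gcongr)
    _ = (2 * L + L ^ 2 / 2) * ε ^ 2 * a ^ 2 := by ring

lemma tendsto_hamiltonian_leapfrog_sub_mul_norm_sq_div (hf : Differentiable ℝ f)
    (hf2 : Differentiable ℝ (gradient f)) (p : E × E) :
    Tendsto (fun ε => (hamiltonian f (leapfrog (gradient f) ε p) - hamiltonian f p) *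
      ‖(leapfrog (gradient f) ε p).1 - p.1‖ ^ 2 / ε ^ 4) (𝓝 0) (𝓝 0) := by
  have hlittleO := (hamiltonian_leapfrog_sub_isLittleO hf hf2 p).mul_isBigO
    ((leapfrog_fst_sub_isBigO (gradient f) p).norm_left.pow 2)
  exact (hlittleO.congr_right fun ε => (pow_add ε 2 2).symm).tendsto_div_nhds_zero

lemma hamiltonian_leapfrog_sub_mul_norm_sq_div_le (hf : Differentiable ℝ f)
    (hL : ∀ x y, ‖gradient f x - gradient f y‖ ≤ L * ‖x - y‖) (hL0 : 0 ≤ L) {ε : ℝ} (hε : 0 < ε)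
    (hε2 : ε ≤ 2) (p : E × E) :
    (hamiltonian f (leapfrog (gradient f) ε p) - hamiltonian f p) *
        ‖(leapfrog (gradient f) ε p).1 - p.1‖ ^ 2 / ε ^ 4 ≤
      (2 * L + L ^ 2 / 2) * (‖p.2‖ + ‖gradient f p.1‖) ^ 4 := by
  rw [div_le_iff₀ (by positivity)]
  calc _ ≤ (2 * L + L ^ 2 / 2) * ε ^ 2 * (‖p.2‖ + ‖gradient f p.1‖) ^ 2 *
        (ε * (‖p.2‖ + ‖gradient f p.1‖)) ^ 2 := by
        gcongr
        · exact (le_abs_self _).trans (abs_hamiltonian_leapfrog_sub_le hf hL hL0 hε.le hε2 p)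
        · exact norm_leapfrog_fst_sub_le hε.le hε2 p
    _ = _ := by ring

end EnergyError

section GibbsMoments

variable {E : Type*} [NormedAddCommGroup E] [InnerProductSpace ℝ E] {m L : ℝ}

lemma IsContractiveDrift.mul_norm_sq_le_inner {b : E → E} (hb : IsContractiveDrift m L b)
    (hL : 0 < L) (x : E) : m * ‖x‖ ^ 2 ≤ inner ℝ (b x) x := by
  have hEuler : inner ℝ (x - L⁻¹ • b x) x ≤ (1 - m * L⁻¹) * ‖x‖ * ‖x‖ :=
    (real_inner_le_norm _ _).trans <| by
      gcongr
      exact hb.norm_euler_le (inv_nonneg.2 hL.le) (inv_mul_cancel₀ hL.ne').le x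
  rw [inner_sub_left, real_inner_self_eq_norm_sq, real_inner_smul_left] at hEuler
  have hscaled : L⁻¹ * (m * ‖x‖ ^ 2) ≤ L⁻¹ * inner ℝ (b x) x := by linarith
  exact le_of_mul_le_mul_left hscaled (inv_pos.2 hL)

lemma add_mul_norm_sq_le_of_mul_norm_sq_le_inner_gradient [CompleteSpace E] {f : E → ℝ}
    (hf : Differentiable ℝ f) (hm : ∀ x, m * ‖x‖ ^ 2 ≤ inner ℝ (gradient f x) x) (x : E) :
    f 0 + m / 2 * ‖x‖ ^ 2 ≤ f x := by
  have hderiv (t : ℝ) : HasDerivAt (fun t : ℝ => f (0 + t • x) - m / 2 * ‖x‖ ^ 2 * t ^ 2)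
      (inner ℝ (gradient f (0 + t • x)) x - m * ‖x‖ ^ 2 * t) t := by
    convert! (hasDerivAt_comp_add_smul hf 0 x t).sub ((hasDerivAt_pow 2 t).const_mul _) using 1
    push_cast
    ring
  have hmono : MonotoneOn (fun t : ℝ => f (0 + t • x) - m / 2 * ‖x‖ ^ 2 * t ^ 2)
      (Set.Icc 0 1) := by
    refine monotoneOn_of_hasDerivWithinAt_nonneg (convex_Icc 0 1)
      (fun t _ => (hderiv t).continuousAt.continuousWithinAt)
      (fun t _ => (hderiv t).hasDerivWithinAt) fun t ht => ?_
    rw [interior_Icc] at ht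
    have hray := hm (0 + t • x)
    rw [zero_add, norm_smul, mul_pow, norm_of_nonneg ht.1.le, real_inner_smul_right] at hray
    rw [zero_add]
    exact le_of_mul_le_mul_left (by linarith) ht.1
  have := hmono (Set.left_mem_Icc.2 zero_le_one) (Set.right_mem_Icc.2 zero_le_one) zero_le_one
  simp only [zero_add, zero_smul, one_smul] at this
  linarith

variable [FiniteDimensional ℝ E] [MeasurableSpace E] [BorelSpace E]

lemma integrable_norm_pow_mul_exp_neg_mul_norm_sq {a : ℝ} (ha : 0 < a) (n : ℕ) :
    Integrable fun x : E => ‖x‖ ^ (2 * n) * exp (-a * ‖x‖ ^ 2) := by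
  refine ((integrable_exp_neg_mul_norm_sq (half_pos ha)).const_mul
    (n.factorial * (2 / a) ^ n)).mono' (by fun_prop) (ae_of_all _ fun x => ?_)
  have hpow := pow_div_factorial_le_exp (x := a / 2 * ‖x‖ ^ 2) (by positivity) n
  rw [div_le_iff₀ (by positivity), mul_pow, ← pow_mul] at hpow
  rw [norm_of_nonneg (by positivity)]
  calc ‖x‖ ^ (2 * n) * exp (-a * ‖x‖ ^ 2)
      = (2 / a) ^ n * ((a / 2) ^ n * ‖x‖ ^ (2 * n)) * exp (-a * ‖x‖ ^ 2) := by
        rw [← mul_assoc, ← mul_pow, div_mul_div_cancel₀' two_ne_zero, div_self ha.ne', one_pow,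
          one_mul]
    _ ≤ (2 / a) ^ n * (exp (a / 2 * ‖x‖ ^ 2) * n.factorial) * exp (-a * ‖x‖ ^ 2) := by gcongr
    _ = n.factorial * (2 / a) ^ n * (exp (a / 2 * ‖x‖ ^ 2) * exp (-a * ‖x‖ ^ 2)) := by ring
    _ = n.factorial * (2 / a) ^ n * exp (-(a / 2) * ‖x‖ ^ 2) := by rw [← exp_add]; ring_nf

lemma memLp_id_of_add_mul_norm_sq_le {f : E → ℝ} (hf : Measurable f) {a C : ℝ} (ha : 0 < a)
    (hgrowth : ∀ x, C + a * ‖x‖ ^ 2 ≤ f x) {c : ℝ≥0∞} (hc : c ≠ ∞) {μ : Measure E}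
    (hμ : μ = c • volume.withDensity fun x => ENNReal.ofReal (exp (-f x))) {n : ℕ} (hn : n ≠ 0) :
    MemLp id ↑(2 * n) μ := by
  rw [← integrable_norm_rpow_iff aestronglyMeasurable_id (by simpa) (ENNReal.natCast_ne_top _), hμ]
  refine .smul_measure ?_ hc
  rw [integrable_withDensity_iff (by fun_prop) (ae_of_all _ fun x => ENNReal.ofReal_lt_top)]
  simp only [ENNReal.toReal_natCast, rpow_natCast, id, ENNReal.toReal_ofReal (exp_pos _).le]
  refine ((integrable_norm_pow_mul_exp_neg_mul_norm_sq ha n).const_mul (exp (-C))).mono'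
    (by fun_prop) (ae_of_all _ fun x => ?_)
  rw [norm_of_nonneg (by positivity), mul_left_comm, ← exp_add]
  gcongr
  linarith [hgrowth x]

end GibbsMoments

section Consistency

open Filter Topology

variable {E : Type*} [NormedAddCommGroup E] [InnerProductSpace ℝ E] [FiniteDimensional ℝ E]
  [MeasurableSpace E] [BorelSpace E] {f : E → ℝ} {L : ℝ} {μ : Measure E}

lemma tendsto_lintegral_hamiltonian_leapfrog_sub_mul_norm_sq_div [IsFiniteMeasure μ]
    (hf : Differentiable ℝ f) (hf2 : Differentiable ℝ (gradient f))
    (hL : ∀ x y, ‖gradient f x - gradient f y‖ ≤ L * ‖x - y‖) (hL0 : 0 ≤ L)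
    (hμ : MemLp (gradient f) 4 μ) :
    Tendsto (fun ε => ∫⁻ p, ENNReal.ofReal
      ((hamiltonian f (leapfrog (gradient f) ε p) - hamiltonian f p) *
        ‖(leapfrog (gradient f) ε p).1 - p.1‖ ^ 2 / ε ^ 4) ∂μ.prod (𝒩 E)) (𝓝[>] 0) (𝓝 0) := by
  have hint : Integrable
      (fun p : E × E => (2 * L + L ^ 2 / 2) * (‖p.2‖ + ‖gradient f p.1‖) ^ 4) (μ.prod (𝒩 E)) := by
    have hsum : MemLp (fun p : E × E => ‖p.2‖ + ‖gradient f p.1‖) 4 (μ.prod (𝒩 E)) :=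
      ((memLp_id_stdGaussian 4).norm.comp_snd μ).add (hμ.norm.comp_fst (𝒩 E))
    have hpow := (hsum.integrable_norm_pow four_ne_zero).const_mul (2 * L + L ^ 2 / 2)
    simpa only [norm_of_nonneg (add_nonneg (norm_nonneg _) (norm_nonneg _))] using hpow
  have hH : Continuous (hamiltonian f) := by
    have := hf.continuous
    unfold hamiltonian; fun_prop
  rw [← lintegral_zero (μ := μ.prod (𝒩 E))]
  refine tendsto_lintegral_filter_of_dominated_convergence
    (fun p => ENNReal.ofReal ((2 * L + L ^ 2 / 2) * (‖p.2‖ + ‖gradient f p.1‖) ^ 4))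
    (Eventually.of_forall fun ε => ?_) ?_ hint.lintegral_lt_top.ne (ae_of_all _ fun p => ?_)
  · have := continuous_leapfrog hf2.continuous ε
    exact Measurable.ennreal_ofReal (by fun_prop)
  · filter_upwards [Ioc_mem_nhdsGT (zero_lt_two' ℝ)] with ε hε
    exact ae_of_all _ fun p => ENNReal.ofReal_le_ofReal
      (hamiltonian_leapfrog_sub_mul_norm_sq_div_le hf hL hL0 hε.1 hε.2 p)
  · simpa using ENNReal.tendsto_ofReal
      ((tendsto_hamiltonian_leapfrog_sub_mul_norm_sq_div hf hf2 p).mono_left nhdsWithin_le_nhds)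

lemma eW2_sq_lmcLaw_self_le_mul (hf : Differentiable ℝ f) (hf2 : Differentiable ℝ (gradient f))
    {c : ℝ≥0∞} [SFinite μ] (hμ : μ = c • volume.withDensity fun x => ENNReal.ofReal (exp (-f x)))
    {δ : ℝ} (hδ : 0 < δ) :
    eW2 (lmcLaw (gradient f) δ μ) μ ^ 2 ≤ ENNReal.ofReal δ ^ 2 * (4 * ∫⁻ p, ENNReal.ofReal
      ((hamiltonian f (leapfrog (gradient f) √(2 * δ) p) - hamiltonian f p) *
        ‖(leapfrog (gradient f) √(2 * δ) p).1 - p.1‖ ^ 2 / √(2 * δ) ^ 4) ∂μ.prod (𝒩 E)) := by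
  refine (eW2_sq_lmcLaw_self_le hf.continuous hf2.continuous hμ hδ.le).trans_eq ?_
  rw [← mul_assoc, ← lintegral_const_mul' _ _ (by finiteness)]
  refine lintegral_congr fun p => ?_
  have hpow : √(2 * δ) ^ 4 = δ ^ 2 * 4 := by
    rw [pow_mul √(2 * δ) 2 2, sq_sqrt (by positivity)]
    ring
  have hfactor : ENNReal.ofReal δ ^ 2 * 4 = ENNReal.ofReal (√(2 * δ) ^ 4) := by
    rw [hpow, ENNReal.ofReal_mul (by positivity), ENNReal.ofReal_pow hδ.le, ENNReal.ofReal_ofNat]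
  rw [hfactor, ← ENNReal.ofReal_mul (by positivity), mul_div_cancel₀ _ (by positivity),
    ENNReal.ofReal_mul' (by positivity), ENNReal.ofReal_pow (norm_nonneg _), ofReal_norm]

lemma tendsto_eW2_lmcLaw_self_div [IsFiniteMeasure μ]
    (hf : Differentiable ℝ f) (hf2 : Differentiable ℝ (gradient f))
    (hL : ∀ x y, ‖gradient f x - gradient f y‖ ≤ L * ‖x - y‖) (hL0 : 0 ≤ L)
    (hμ4 : MemLp (gradient f) 4 μ) {c : ℝ≥0∞}
    (hμ : μ = c • volume.withDensity fun x => ENNReal.ofReal (exp (-f x))) :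
    Tendsto (fun δ => eW2 (lmcLaw (gradient f) δ μ) μ / ENNReal.ofReal δ) (𝓝[>] 0) (𝓝 0) := by
  have hsqrt : Tendsto (fun δ => √(2 * δ)) (𝓝[>] 0) (𝓝[>] 0) := by
    refine tendsto_nhdsWithin_iff.2 ⟨?_, ?_⟩
    · have := (by fun_prop : Continuous fun δ => √(2 * δ)).tendsto 0
      simpa using this.mono_left nhdsWithin_le_nhds
    · filter_upwards [self_mem_nhdsWithin] with δ (hδ : 0 < δ)
      exact sqrt_pos.2 (by positivity)
  have hlim := ENNReal.Tendsto.const_mul (a := 4)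
    ((tendsto_lintegral_hamiltonian_leapfrog_sub_mul_norm_sq_div hf hf2 hL hL0 hμ4).comp hsqrt)
    (.inr (by finiteness))
  rw [mul_zero] at hlim
  refine ENNReal.tendsto_nhds_zero.2 fun r hr => ?_
  filter_upwards [ENNReal.tendsto_nhds_zero.1 hlim (r ^ 2) (by positivity), self_mem_nhdsWithin]
    with δ hδr (hδ : 0 < δ)
  refine ENNReal.div_le_of_le_mul' ((ENNReal.pow_le_pow_left_iff two_ne_zero).1 ?_)
  rw [mul_pow]
  exact (eW2_sq_lmcLaw_self_le_mul hf hf2 hμ hδ).trans (by gcongr; exact hδr)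

end Consistency

section Gradient

open Laplacian

section DirectionalDerivative

variable {E F : Type*} [NormedAddCommGroup E] [NormedAddCommGroup F] [NormedSpace ℝ F] {g : E → F}

lemma contDiff_fderiv_apply [NormedSpace ℝ E] {n : ℕ} (hg : ContDiff ℝ (n + 1) g) (v : E) :
    ContDiff ℝ n fun y => fderiv ℝ g y v :=
  (hg.fderiv_right le_rfl).clm_apply contDiff_const

lemma fderiv_fderiv_apply [NormedSpace ℝ E] (hg : ContDiff ℝ 2 g) (x u v : E) :
    fderiv ℝ (fun y => fderiv ℝ g y v) x u = fderiv ℝ (fderiv ℝ g) x u v := by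
  have hd : DifferentiableAt ℝ (fderiv ℝ g) x :=
    (hg.fderiv_right (m := 1) le_rfl).differentiable one_ne_zero x
  simp [fderiv_clm_apply hd (differentiableAt_const v)]

lemma fderiv_fderiv_apply_comm [NormedSpace ℝ E] (hg : ContDiff ℝ 2 g) (u v : E) :
    (fun x => fderiv ℝ (fun y => fderiv ℝ g y v) x u) =
      fun x => fderiv ℝ (fun y => fderiv ℝ g y u) x v := by
  funext x
  rw [fderiv_fderiv_apply hg, fderiv_fderiv_apply hg]
  exact hg.contDiffAt.isSymmSndFDerivAt (by simp) u v

variable [InnerProductSpace ℝ E] [FiniteDimensional ℝ E]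

lemma laplacian_eq_sum_fderiv_fderiv (hg : ContDiff ℝ 2 g) :
    Δ g = fun x => ∑ i, fderiv ℝ (fun y => fderiv ℝ g y (stdOrthonormalBasis ℝ E i)) x
      (stdOrthonormalBasis ℝ E i) := by
  simp_rw [InnerProductSpace.laplacian_eq_iteratedFDeriv_stdOrthonormalBasis,
    fderiv_fderiv_apply hg, iteratedFDeriv_two_apply]
  rfl

lemma laplacian_fderiv_apply (hg : ContDiff ℝ 3 g) (x v : E) :
    Δ (fun y => fderiv ℝ g y v) x = fderiv ℝ (Δ g) x v := by
  have hg2 : ContDiff ℝ 2 g := hg.of_le (by norm_num)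
  have hdir (u : E) : ContDiff ℝ 2 fun y => fderiv ℝ g y u := contDiff_fderiv_apply hg u
  have hdir2 (u : E) : Differentiable ℝ fun x => fderiv ℝ (fun y => fderiv ℝ g y u) x u :=
    (contDiff_fderiv_apply (n := 1) (hdir u) u).differentiable one_ne_zero
  rw [laplacian_eq_sum_fderiv_fderiv (hdir v), laplacian_eq_sum_fderiv_fderiv hg2,
    fderiv_fun_sum fun i _ => hdir2 _ x, sum_apply]
  refine Finset.sum_congr rfl fun i _ => ?_
  rw [fderiv_fderiv_apply_comm hg2]
  exact congrFun (fderiv_fderiv_apply_comm (hdir _) _ _) x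

end DirectionalDerivative

section Hessian

variable {E : Type*} [NormedAddCommGroup E] [InnerProductSpace ℝ E] {m L c : ℝ}

lemma norm_le_of_isSymmetric_of_abs_inner_le {T : E →L[ℝ] E}
    (hT : (T : E →ₗ[ℝ] E).IsSymmetric) (hc : 0 ≤ c)
    (h : ∀ v, |inner ℝ (T v) v| ≤ c * ‖v‖ ^ 2) : ‖T‖ ≤ c := by
  rw [ContinuousLinearMap.norm_eq_iSup_rayleighQuotient T hT]
  refine ciSup_le fun v => ?_
  rw [ContinuousLinearMap.rayleighQuotient, abs_div, abs_sq]
  exact div_le_of_le_mul₀ (by positivity) hc (h v)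

variable [CompleteSpace E] {f : E → ℝ}

lemma contDiff_gradient {n : ℕ} (hf : ContDiff ℝ (n + 1) f) : ContDiff ℝ n (gradient f) :=
  (InnerProductSpace.toDual ℝ E).symm.toContinuousLinearEquiv.contDiff.comp
    (hf.fderiv_right le_rfl)

lemma inner_fderiv_gradient (hf : ContDiff ℝ 2 f) (x u v : E) :
    inner ℝ (fderiv ℝ (gradient f) x u) v = fderiv ℝ (fderiv ℝ f) x u v := by
  have hgrad : DifferentiableAt ℝ (gradient f) x :=
    (contDiff_gradient (n := 1) hf).differentiable one_ne_zero x
  have := fderiv_inner_apply ℝ hgrad (differentiableAt_const v) u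
  simpa [inner_gradient_left, fderiv_fderiv_apply hf] using this.symm

lemma isSymmetric_fderiv_gradient (hf : ContDiff ℝ 2 f) (x : E) :
    (fderiv ℝ (gradient f) x : E →ₗ[ℝ] E).IsSymmetric := fun u v => by
  rw [real_inner_comm _ u]
  exact (inner_fderiv_gradient hf x u v).trans <|
    (hf.contDiffAt.isSymmSndFDerivAt (by simp) u v).trans (inner_fderiv_gradient hf x v u).symm

lemma norm_gradient_sub_le (hf : ContDiff ℝ 2 f) (hL : 0 ≤ L)
    (hH : ∀ x v, |inner ℝ (fderiv ℝ (gradient f) x v) v| ≤ L * ‖v‖ ^ 2) (x y : E) :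
    ‖gradient f x - gradient f y‖ ≤ L * ‖x - y‖ :=
  convex_univ.norm_image_sub_le_of_norm_fderiv_le
    (fun z _ => (contDiff_gradient (n := 1) hf).differentiable one_ne_zero z)
    (fun z _ => norm_le_of_isSymmetric_of_abs_inner_le (isSymmetric_fderiv_gradient hf z) hL (hH z))
    (Set.mem_univ y) (Set.mem_univ x)

lemma norm_sub_smul_gradient_sub_le (hf : ContDiff ℝ 2 f) {h : ℝ} (hh : 0 ≤ h) (hhL : h * L ≤ 1)
    (hmh : m * h ≤ 1) (hlower : ∀ x v, m * ‖v‖ ^ 2 ≤ inner ℝ (fderiv ℝ (gradient f) x v) v)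
    (hupper : ∀ x v, inner ℝ (fderiv ℝ (gradient f) x v) v ≤ L * ‖v‖ ^ 2) (x y : E) :
    ‖x - y - h • (gradient f x - gradient f y)‖ ≤ (1 - m * h) * ‖x - y‖ := by
  have hEuler (z : E) : HasFDerivAt (fun x => x - h • gradient f x)
      (.id ℝ E - h • fderiv ℝ (gradient f) z) z :=
    (hasFDerivAt_id z).sub
      (((contDiff_gradient (n := 1) hf).differentiable one_ne_zero z).hasFDerivAt.const_smul h)
  rw [smul_sub, ← sub_sub_sub_comm]
  refine convex_univ.norm_image_sub_le_of_norm_hasFDerivWithin_le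
    (fun z _ => (hEuler z).hasFDerivWithinAt) (fun z _ => ?_) (Set.mem_univ y) (Set.mem_univ x)
  refine norm_le_of_isSymmetric_of_abs_inner_le
    (LinearMap.IsSymmetric.id.sub ((isSymmetric_fderiv_gradient hf z).smul (by simp)))
    (by linarith) fun v => ?_
  have hlower_v := mul_le_mul_of_nonneg_left (hlower z v) hh
  have hupper_v := mul_le_mul_of_nonneg_left (hupper z v) hh
  have hcontract := mul_le_mul_of_nonneg_right hhL (sq_nonneg ‖v‖)
  rw [sub_apply, ContinuousLinearMap.id_apply, smul_apply, inner_sub_left, real_inner_smul_left,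
    real_inner_self_eq_norm_sq, abs_of_nonneg (by linarith)]
  linarith

lemma isContractiveDrift_gradient (hf : ContDiff ℝ 2 f) (hm : 0 ≤ m) (hmL : m ≤ L)
    (hH : ∀ x v, m * ‖v‖ ^ 2 ≤ iteratedFDeriv ℝ 2 f x ![v, v] ∧
      iteratedFDeriv ℝ 2 f x ![v, v] ≤ L * ‖v‖ ^ 2) (hcrit : gradient f 0 = 0) :
    IsContractiveDrift m L (gradient f) := by
  have hhess (x v : E) : m * ‖v‖ ^ 2 ≤ inner ℝ (fderiv ℝ (gradient f) x v) v ∧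
      inner ℝ (fderiv ℝ (gradient f) x v) v ≤ L * ‖v‖ ^ 2 := by
    simpa [inner_fderiv_gradient hf, iteratedFDeriv_two_apply] using hH x v
  refine ⟨hcrit, norm_gradient_sub_le hf (hm.trans hmL) fun x v => ?_, fun h hh hhL =>
    norm_sub_smul_gradient_sub_le hf hh hhL (by nlinarith) (fun x v => (hhess x v).1)
      fun x v => (hhess x v).2⟩
  have hnonneg : 0 ≤ m * ‖v‖ ^ 2 := by positivity
  rw [abs_of_nonneg (hnonneg.trans (hhess x v).1)]
  exact (hhess x v).2

end Hessian

lemma laplacian_gradient {E : Type*} [NormedAddCommGroup E] [InnerProductSpace ℝ E]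
    [FiniteDimensional ℝ E] {f : E → ℝ} (hf : ContDiff ℝ 3 f) :
    Δ (gradient f) = gradient (Δ f) := by
  funext x
  refine ext_inner_right ℝ fun v => ?_
  have := ((contDiff_gradient (n := 2) hf).contDiffAt (x := x)).laplacian_CLM_comp_left
    (l := innerSL ℝ v)
  rw [inner_gradient_left, ← laplacian_fderiv_apply hf, real_inner_comm]
  refine this.symm.trans (congrFun (congrArg _ (funext fun y => ?_)) x)
  exact (real_inner_comm _ _).trans inner_gradient_left

end Gradient

section RandomRecursion

variable {Ω E : Type*} {mΩ : MeasurableSpace Ω} {P : Measure Ω}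
  [MeasurableSpace E] {ν η : Measure E} {Φ : E × E → E} {ξ : ℕ → Ω → E} {x₀ : Ω → E}
  {X : ℕ → Ω → E}

lemma exists_measurable_eq_of_recursion (hΦ : Measurable Φ) (hX₀ : X 0 = x₀)
    (hX : ∀ k, X (k + 1) = fun ω => Φ (X k ω, ξ (k + 1) ω)) (k : ℕ) :
    ∃ Ψ : ((Finset.range (k + 1)).insertNone → E) → E, Measurable Ψ ∧
      X k = fun ω => Ψ fun i => (i : Option ℕ).elim x₀ ξ ω := by
  induction k with
  | zero => exact ⟨fun v => v ⟨none, by simp⟩, by fun_prop, hX₀⟩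
  | succ k ih =>
    obtain ⟨Ψ, hΨ, hXΨ⟩ := ih
    have hsub : (Finset.range (k + 1)).insertNone ⊆ (Finset.range (k + 1 + 1)).insertNone :=
      Finset.insertNone.monotone (Finset.range_subset_range.2 (Nat.le_succ _))
    refine ⟨fun v => Φ (Ψ fun i => v ⟨i, hsub i.2⟩, v ⟨some (k + 1), by simp⟩), ?_, ?_⟩
    · fun_prop
    · rw [hX k, hXΨ]
      rfl

lemma indepFun_of_recursion (hΦ : Measurable Φ)
    (hmeas : ∀ i : Option ℕ, AEMeasurable (i.elim x₀ ξ) P)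
    (hindep : iIndepFun (fun i : Option ℕ => i.elim x₀ ξ) P) (hX₀ : X 0 = x₀)
    (hX : ∀ k, X (k + 1) = fun ω => Φ (X k ω, ξ (k + 1) ω)) (k : ℕ) :
    IndepFun (X k) (ξ (k + 1)) P := by
  obtain ⟨Ψ, hΨ, hXΨ⟩ := exists_measurable_eq_of_recursion hΦ hX₀ hX k
  have hdisj : Disjoint (Finset.range (k + 1)).insertNone {some (k + 1)} := by simp
  have hnext : Measurable fun v : ({some (k + 1)} : Finset (Option ℕ)) → E =>
      v ⟨some (k + 1), Finset.mem_singleton_self _⟩ := measurable_pi_apply _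
  rw [hXΨ]
  exact (hindep.indepFun_finset₀ _ _ hdisj hmeas).comp hΨ hnext

theorem hasLaw_iterate_of_recursion (hΦ : Measurable Φ) (hx₀ : HasLaw x₀ ν P)
    (hξ : ∀ k, HasLaw (ξ k) η P) (hindep : iIndepFun (fun i : Option ℕ => i.elim x₀ ξ) P)
    (hX₀ : X 0 = x₀) (hX : ∀ k, X (k + 1) = fun ω => Φ (X k ω, ξ (k + 1) ω)) (k : ℕ) :
    HasLaw (X k) ((fun ρ => (ρ.prod η).map Φ)^[k] ν) P := by
  have := hindep.isProbabilityMeasure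
  have hmeas : ∀ i : Option ℕ, AEMeasurable (i.elim x₀ ξ) P
    | none => hx₀.aemeasurable
    | some k => (hξ k).aemeasurable
  induction k with
  | zero => rwa [hX₀]
  | succ k ih =>
    have hprod := (indepFun_iff_map_prod_eq_prod_map_map ih.aemeasurable (hξ _).aemeasurable).1
      (indepFun_of_recursion hΦ hmeas hindep hX₀ hX k)
    rw [ih.map_eq, (hξ _).map_eq] at hprod
    have hpair : HasLaw (fun ω => (X k ω, ξ (k + 1) ω)) _ P :=
      ⟨ih.aemeasurable.prodMk (hξ _).aemeasurable, hprod⟩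
    rw [hX, Function.iterate_succ_apply']
    exact HasLaw.comp ⟨hΦ.aemeasurable, rfl⟩ hpair

end RandomRecursion

section Main

open Laplacian InnerProductSpace Filter Topology

variable {E : Type*} [NormedAddCommGroup E] [InnerProductSpace ℝ E] [FiniteDimensional ℝ E]
  [MeasurableSpace E] [BorelSpace E] {m L G h : ℝ} {μ ν : Measure E} [IsProbabilityMeasure μ]

theorem W2_iterate_lmcLaw_le [IsProbabilityMeasure ν] {b : E → E} (hb : IsContractiveDrift m L b)
    (hb2 : ContDiff ℝ 2 b) (hΔ : ∀ x, ‖Δ b x‖ ≤ G * (1 + ‖x‖)) (hm : 0 < m) (hmL : m ≤ L)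
    (hh : 0 < h) (hhL : h * L ≤ 1) (hν : MemLp id 2 ν) (hμ : MemLp id 2 μ)
    (hlocal : Tendsto (fun δ => eW2 (lmcLaw b δ μ) μ / ENNReal.ofReal δ) (𝓝[>] 0) (𝓝 0)) (k : ℕ) :
    W2 ((lmcLaw b h)^[k] ν) μ ≤ exp (-(m * k * h)) * W2 ν μ +
      2 * (L ^ 2 + G) / m ^ ((3 : ℝ) / 2) *
        √(2 * finrank ℝ E + m * ((∫ x, ‖x‖ ^ 2 ∂ν) + 1)) * h := by
  have hG : 0 ≤ G := by simpa using (norm_nonneg _).trans (hΔ 0)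
  have := isProbabilityMeasure_iterate_lmcLaw (ν := ν) (h := h) hb.continuous.measurable k
  set S := √(2 * finrank ℝ E + m * ((∫ x, ‖x‖ ^ 2 ∂ν) + 1))
  have hS : S ^ 2 = 2 * finrank ℝ E + m * ((∫ x, ‖x‖ ^ 2 ∂ν) + 1) := Real.sq_sqrt (by positivity)
  have hmoment : 1 + ∫⁻ x, ‖x‖ₑ ^ 2 ∂ν + ENNReal.ofReal (2 * finrank ℝ E / m) ≤
      ENNReal.ofReal ((S / √m) ^ 2) := by
    have hlint := lintegral_enorm_sq_eq_ofReal hν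
    simp only [id] at hlint
    rw [hlint, ← ENNReal.ofReal_one, ← ENNReal.ofReal_add zero_le_one (by positivity),
      ← ENNReal.ofReal_add (by positivity) (by positivity), div_pow, hS, Real.sq_sqrt hm.le]
    refine ENNReal.ofReal_le_ofReal (le_of_eq ?_)
    field_simp
    ring
  have hmpow : m ^ ((3 : ℝ) / 2) = m * √m := by
    rw [Real.sqrt_eq_rpow, ← rpow_one_add' hm.le (by norm_num)]
    norm_num
  have hfin : eW2 ν μ ≠ ∞ := (eW2_lt_top hν hμ).ne
  have hbound := eW2_iterate_lmcLaw_le hb hb2 hΔ hm hmL hh hhL (by positivity) hmoment hlocal k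
  simp only [W2_eq_toReal_eW2]
  refine (ENNReal.toReal_mono (by finiteness) hbound).trans_eq ?_
  rw [ENNReal.toReal_add (by finiteness) (by finiteness), ENNReal.toReal_mul,
    ENNReal.toReal_ofReal (exp_pos _).le, ENNReal.toReal_ofReal (by positivity), hmpow]
  field_simp

theorem W2_iterate_lmcLaw_gradient_le [IsProbabilityMeasure ν] {f : E → ℝ} {c : ℝ≥0∞} (hm : 0 < m)
    (hmL : m ≤ L) (hf : ContDiff ℝ 3 f)
    (hHess : ∀ x v, m * ‖v‖ ^ 2 ≤ iteratedFDeriv ℝ 2 f x ![v, v] ∧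
      iteratedFDeriv ℝ 2 f x ![v, v] ≤ L * ‖v‖ ^ 2)
    (hcrit : gradient f 0 = 0) (hlapl : ∀ x, ‖gradient (Δ f) x‖ ≤ G * (1 + ‖x‖)) (hc : c ≠ ∞)
    (hμ : μ = c • volume.withDensity fun x => ENNReal.ofReal (exp (-f x))) (hh : 0 < h)
    (hhL : h * L ≤ 1) (hν : MemLp id 2 ν) (k : ℕ) :
    W2 ((lmcLaw (gradient f) h)^[k] ν) μ ≤ exp (-(m * k * h)) * W2 ν μ +
      2 * (L ^ 2 + G) / m ^ ((3 : ℝ) / 2) *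
        √(2 * finrank ℝ E + m * ((∫ x, ‖x‖ ^ 2 ∂ν) + 1)) * h := by
  have hf1 : Differentiable ℝ f := hf.differentiable (by norm_num)
  have hgrad : ContDiff ℝ 2 (gradient f) := contDiff_gradient hf
  have hb := isContractiveDrift_gradient (hf.of_le (by norm_num)) hm.le hmL hHess hcrit
  have hgrowth := add_mul_norm_sq_le_of_mul_norm_sq_le_inner_gradient hf1
    (hb.mul_norm_sq_le_inner (hm.trans_le hmL))
  have hmem {n : ℕ} (hn : n ≠ 0) : MemLp id ((2 * n : ℕ) : ℝ≥0∞) μ :=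
    memLp_id_of_add_mul_norm_sq_le hf.continuous.measurable (half_pos hm) hgrowth hc hμ hn
  have hlocal := tendsto_eW2_lmcLaw_self_div hf1 (hgrad.differentiable two_ne_zero)
    hb.norm_sub_le (hm.le.trans hmL) (hb.lipschitzWith.comp_memLp hb.map_zero (hmem two_ne_zero)) hμ
  exact W2_iterate_lmcLaw_le hb hgrad (by rwa [laplacian_gradient hf]) hm hmL hh hhL hν
    (hmem one_ne_zero) hlocal k

lemma lapl_eq_laplacian {d : ℕ} {f : Euc d → ℝ} : lapl f = Δ f := by
  rw [laplacian_eq_iteratedFDeriv_orthonormalBasis f (EuclideanSpace.basisFun (Fin d) ℝ)]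
  ext
  simp [lapl]

theorem lmc_w2_nonasymptotic_bound_general {Ω : Type*} {mΩ : MeasurableSpace Ω} {P : Measure Ω}
    {f : E → ℝ} {c : ℝ≥0∞} {x₀ : Ω → E} {ξ X : ℕ → Ω → E} (hm : 0 < m) (hmL : m ≤ L)
    (hf : ContDiff ℝ 3 f)
    (hHess : ∀ x v, m * ‖v‖ ^ 2 ≤ iteratedFDeriv ℝ 2 f x ![v, v] ∧
      iteratedFDeriv ℝ 2 f x ![v, v] ≤ L * ‖v‖ ^ 2)
    (hcrit : gradient f 0 = 0) (hlapl : ∀ x, ‖gradient (Δ f) x‖ ≤ G * (1 + ‖x‖)) (hc : c ≠ ∞)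
    (hμ : μ = c • volume.withDensity fun x => ENNReal.ofReal (exp (-f x))) (hx₀ : MemLp x₀ 2 P)
    (hξ : ∀ k, HasLaw (ξ k) (𝒩 E) P) (hindep : iIndepFun (fun i : Option ℕ => i.elim x₀ ξ) P)
    (hh : 0 < h) (hhL : h * L ≤ 1) (hX₀ : X 0 = x₀)
    (hX : ∀ k, X (k + 1) = fun ω => X k ω - h • gradient f (X k ω) + √(2 * h) • ξ (k + 1) ω)
    (k : ℕ) :
    W2 (P.map (X k)) μ ≤ exp (-(m * k * h)) * W2 (P.map x₀) μ +
      2 * (L ^ 2 + G) / m ^ ((3 : ℝ) / 2) *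
        √(2 * finrank ℝ E + m * ((∫ ω, ‖x₀ ω‖ ^ 2 ∂P) + 1)) * h := by
  have := hindep.isProbabilityMeasure
  have := Measure.isProbabilityMeasure_map hx₀.aemeasurable
  have hgrad : Measurable (gradient f) := (contDiff_gradient (n := 2) hf).continuous.measurable
  have hlaw : HasLaw (X k) ((lmcLaw (gradient f) h)^[k] (P.map x₀)) P :=
    hasLaw_iterate_of_recursion (measurable_lmcStep hgrad h) ⟨hx₀.aemeasurable, rfl⟩ hξ hindep hX₀
      hX k
  have hmoment : ∫ ω, ‖x₀ ω‖ ^ 2 ∂P = ∫ x, ‖x‖ ^ 2 ∂P.map x₀ :=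
    (integral_map (f := fun x => ‖x‖ ^ 2) hx₀.aemeasurable (by fun_prop)).symm
  rw [hlaw.map_eq, hmoment]
  exact W2_iterate_lmcLaw_gradient_le hm hmL hf hHess hcrit hlapl hc hμ hh hhL
    ((memLp_map_measure_iff aestronglyMeasurable_id hx₀.aemeasurable).2 hx₀) k

end Main

/-- **Non-asymptotic 2-Wasserstein error bound for LMC** (Theorem 3).
Let `f ∈ C³` be `m`-strongly convex and `L`-smooth (`0 < m ≤ L`) with `∇f(0) = 0` and
`‖∇(Δf)(x)‖ ≤ G (1 + ‖x‖)` for some `G > 0`.  Let `μ ∝ exp (-f)` have finite second moment,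
and let `x̄_k` be the LMC iterates with step size `h` started from a square-integrable `x₀`,
driven by i.i.d. standard Gaussian vectors independent of `x₀`.  Then for every
`0 < h ≤ 1/(4κL)` and every `k`:
`W₂(Law(x̄_k), μ) ≤ exp (-m k h) W₂(Law(x₀), μ) + C_LMC h`, where
`C_LMC = (10 (L² + G)/m^{3/2}) √(2d + m (E‖x₀‖² + 1))`. -/
theorem lmc_w2_nonasymptotic_bound
    {d : ℕ} {Ω : Type*} {mΩ : MeasurableSpace Ω} {P : Measure Ω} [IsProbabilityMeasure P]
    {f : Euc d → ℝ} {m L G : ℝ}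
    (hm : 0 < m) (hmL : m ≤ L) (hf : ContDiff ℝ 3 f) (hHess : HessianBounds m L f)
    (hgrad0 : gradient f 0 = 0) (hG : 0 < G)
    (hlapl : ∀ x : Euc d, ‖gradient (lapl f) x‖ ≤ G * (1 + ‖x‖))
    {μ : Measure (Euc d)} (hμ : IsGibbs f μ)
    (hμ2 : (∫⁻ x, (‖x‖₊ : ℝ≥0∞) ^ 2 ∂μ) < ⊤)
    {x0 : Ω → Euc d} (hx0 : MemLp x0 2 P)
    {ξ : ℕ → Ω → Euc d} (hξmeas : ∀ k, Measurable (ξ k))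
    (hξlaw : ∀ k, P.map (ξ k) = stdGaussian d)
    (hindep : iIndepFun (fun i : Option ℕ => i.elim x0 ξ) P)
    {h : ℝ} (hh0 : 0 < h) (hh1 : h ≤ 1 / (4 * (L / m) * L))
    {Xb : ℕ → Ω → Euc d} (hXb0 : Xb 0 = x0)
    (hXb : ∀ k : ℕ, Xb (k + 1) =
      fun ω => Xb k ω - h • gradient f (Xb k ω) + Real.sqrt (2 * h) • ξ (k + 1) ω)
    (k : ℕ) :
    W2 (P.map (Xb k)) μ ≤
      Real.exp (-(m * k * h)) * W2 (P.map x0) μ +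
        (10 * (L ^ 2 + G) / m ^ ((3:ℝ)/2) *
          Real.sqrt (2 * d + m * ((∫ ω, ‖x0 ω‖ ^ 2 ∂P) + 1))) * h := by
  obtain ⟨_, c, -, hc, hμ⟩ := hμ
  have hL : 0 < L := hm.trans_le hmL
  have hξ (k : ℕ) : HasLaw (ξ k) (𝒩 (Euc d)) P :=
    ⟨(hξmeas k).aemeasurable, (hξlaw k).trans map_pi_eq_stdGaussian⟩
  have hhL : h * L ≤ 1 := by
    rw [le_div_iff₀ (by positivity)] at hh1
    have hκ : 1 ≤ 4 * (L / m) := by linarith [(one_le_div hm).2 hmL]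
    linarith [le_mul_of_one_le_right (mul_pos hh0 hL).le hκ]
  refine (lmc_w2_nonasymptotic_bound_general hm hmL hf hHess hgrad0 (lapl_eq_laplacian ▸ hlapl) hc
    hμ hx0 hξ hindep hh0 hhL hXb0 hXb k).trans ?_
  rw [finrank_euclideanSpace_fin]
  gcongr
  norm_num

end
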